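/- arXiv:math/0507588 — 17 statements merged into one kernel-verified Lean document; each statement's English description precedes it below -/
import Mathlib

section
/- Let $a, b, i, r$ be integers with $1 \le a \le b$, $i \ge 1$, and $r \ge 1$. If every $r$-coloring of the positive integers admits a monochromatic $(a+i, b+2i)$-triple, then every $r$-coloring of the positive integers admits a monochromatic $(a,b)$-triple. -/
/-- If every `r`-coloring of the positive integers admits a monochromatic
`(a+i, b+2i)`-triple, then every `r`-coloring admits a monochromatic `(a,b)`-triple. -/
theorem dor_monotone (a b i r : ℕ) (ha : 1 ≤ a) (hab : a ≤ b) (hi : 1 ≤ i) (hr : 1 ≤ r)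
    (H : ∀ χ : ℕ → Fin r, ∃ x d : ℕ, 0 < x ∧ 0 < d ∧
      χ x = χ ((a + i) * x + d) ∧ χ ((a + i) * x + d) = χ ((b + 2 * i) * x + 2 * d)) :
    ∀ χ : ℕ → Fin r, ∃ x d : ℕ, 0 < x ∧ 0 < d ∧
      χ x = χ (a * x + d) ∧ χ (a * x + d) = χ (b * x + 2 * d) := by
  -- An `(a+i, b+2i)`-triple with difference `d` is the `(a,b)`-triple with the same `x` and
  -- difference `i * x + d`.
  intro χ
  obtain ⟨x, d, hx, hd, h1, h2⟩ := H χ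
  have e1 : (a + i) * x + d = a * x + (i * x + d) := by ring
  have e2 : (b + 2 * i) * x + 2 * d = b * x + 2 * (i * x + d) := by ring
  rw [e1] at h1 h2
  rw [e2] at h2
  exact ⟨x, i * x + d, hx, by positivity, h1, h2⟩
end

section
/- Let $a, b$ be integers with $1 \le a \le b$ and $(a,b) \ne (1,1)$. Then $(a,b)$ is not regular: there exists an integer $r \ge 1$ and an $r$-coloring of the positive integers that admits no monochromatic $(a,b)$-triple. -/
/-!
In every triple `(x, y, z) = (x, a * x + d, b * x + 2 * d)`, one of the ratios `y / x`, `z / y`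
lies in a fixed interval `[β, B]` with `β > 1`.  If `a < b` this is true of `z / y`, which lies
between `b / a` and `2`.  If `a = b ≥ 2`, then `z / y` can be close to `1`, but `z / y ≥ 3 / 2` as
soon as `d ≥ a * x`, while otherwise `2 ≤ y / x ≤ 2 * a`.  Colouring `n` by `⌊log_β n⌋` modulo a
large enough number separates any two integers whose ratio lies in `[β, B]`
(`exists_coloring_of_ratio`), so no triple is monochromatic.
-/

/-- For `β > 1`, some finite colouring separates all `u, v` with `β ≤ v / u ≤ B`: the colour of
`n` is `⌊log_β n⌋` modulo `⌈log_β B⌉ + 1`. -/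
lemma exists_coloring_of_ratio (β B : ℝ) (hβ : 1 < β) :
    ∃ r : ℕ, 1 ≤ r ∧ ∃ χ : ℕ → Fin r, ∀ u v : ℕ, 0 < u →
      β * u ≤ v → (v : ℝ) ≤ B * u → χ u ≠ χ v := by
  have hlog : 0 < Real.log β := Real.log_pos hβ
  set K : ℕ := ⌈Real.log B / Real.log β⌉₊ with hK
  let f : ℕ → ℕ := fun n => ⌊Real.log n / Real.log β⌋₊
  refine ⟨K + 1, by omega, fun n => ⟨f n % (K + 1), Nat.mod_lt _ (by omega)⟩, ?_⟩
  intro u v hu h1 h2 heq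
  have hu' : (0 : ℝ) < u := by exact_mod_cast hu
  have hu1 : (1 : ℝ) ≤ u := by exact_mod_cast hu
  have hv' : (0 : ℝ) < v := by nlinarith
  have hB : 0 < B := by
    by_contra! h
    nlinarith
  have hnn : 0 ≤ Real.log u / Real.log β := div_nonneg (Real.log_nonneg hu1) hlog.le
  have hlow : f u + 1 ≤ f v := by
    have h : Real.log u / Real.log β + 1 ≤ Real.log v / Real.log β := by
      have := Real.log_le_log (by positivity) h1
      rw [Real.log_mul (by positivity) hu'.ne'] at this
      rw [div_add_one hlog.ne']
      gcongr
      linarith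
    calc f u + 1 = ⌊Real.log u / Real.log β + 1⌋₊ := (Nat.floor_add_one hnn).symm
      _ ≤ f v := Nat.floor_mono h
  have hhigh : f v ≤ f u + K := by
    have h : Real.log v / Real.log β ≤ Real.log u / Real.log β + K := by
      have := Real.log_le_log hv' h2
      rw [Real.log_mul hB.ne' hu'.ne'] at this
      calc Real.log v / Real.log β ≤ (Real.log B + Real.log u) / Real.log β := by gcongr
        _ = Real.log u / Real.log β + Real.log B / Real.log β := by ring
        _ ≤ _ := by gcongr; exact Nat.le_ceil _
    calc f v ≤ ⌊Real.log u / Real.log β + K⌋₊ := Nat.floor_mono h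
      _ = f u + K := Nat.floor_add_natCast hnn K
  have hmod : f u ≡ f v [MOD K + 1] := congrArg Fin.val heq
  have hdvd := (Nat.modEq_iff_dvd' (by omega)).1 hmod
  have := Nat.le_of_dvd (by omega) hdvd
  omega

/-- If `(a,b) ≠ (1,1)`, then `(a,b)` is not regular: some `r`-coloring of the
positive integers admits no monochromatic `(a,b)`-triple. -/
theorem not_regular_of_ne_one_one (a b : ℕ) (ha : 1 ≤ a) (hab : a ≤ b)
    (hne : (a, b) ≠ (1, 1)) :
    ∃ r : ℕ, 1 ≤ r ∧ ∃ χ : ℕ → Fin r, ∀ x d : ℕ, 0 < x → 0 < d →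
      ¬(χ x = χ (a * x + d) ∧ χ (a * x + d) = χ (b * x + 2 * d)) := by
  have ha0 : (0 : ℝ) < a := by exact_mod_cast ha
  -- `(a + 1) / a` is at most each lower bound `b / a`, `3 / 2`, `2` on the relevant ratio.
  obtain ⟨r, hr, χ, hχ⟩ := exists_coloring_of_ratio ((a + 1) / a) (2 * b + 2)
    (by rw [one_lt_div ha0]; linarith)
  have key : ∀ u v : ℕ, 0 < u → (a + 1) * u ≤ a * v → v ≤ (2 * b + 2) * u → χ u ≠ χ v := by
    intro u v hu h1 h2
    refine hχ u v hu ?_ (by exact_mod_cast h2)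
    rw [div_mul_eq_mul_div, div_le_iff₀ ha0, mul_comm (v : ℝ)]
    exact_mod_cast h1
  refine ⟨r, hr, χ, fun x d hx hd ⟨hxy, hyz⟩ => ?_⟩
  have hup : b * x + 2 * d ≤ (2 * b + 2) * (a * x + d) := by
    have : b * x * 1 ≤ b * x * a := Nat.mul_le_mul_left _ ha
    have : 0 ≤ b * x * a + 2 * b * d + 2 * a * x := Nat.zero_le _
    nlinarith
  rcases hab.lt_or_eq with hlt | rfl
  · refine key _ _ (by positivity) ?_ hup hyz
    have h1 : a * x * (a + 1) ≤ a * x * b := Nat.mul_le_mul_left _ hlt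
    have h2 : d * 1 ≤ d * a := Nat.mul_le_mul_left _ ha
    nlinarith
  · have ha2 : 2 ≤ a := by
      rcases Nat.lt_or_ge a 2 with h | h
      · obtain rfl : a = 1 := by omega
        exact absurd rfl hne
      · exact h
    rcases le_or_gt (a * x) d with h | h
    · refine key _ _ (by positivity) ?_ hup hyz
      -- The difference of the two sides is `(a - 1) * d - a * x`, and `a - 1 ≥ 1`.
      have h2 : d * 2 ≤ d * a := Nat.mul_le_mul_left _ ha2
      nlinarith
    · refine key _ _ hx ?_ (by nlinarith) hxy
      have h1 : a * x * 2 ≤ a * x * a := Nat.mul_le_mul_left _ ha2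
      have h2 : x * 1 ≤ x * a := Nat.mul_le_mul_left _ ha
      nlinarith [Nat.zero_le (a * d)]
end

section
/- Let $a, b$ be integers with $1 \le a \le b$. If $b - 2a \notin \{-2, -1, 1\}$, then there exists an integer $r \ge 1$ and an $r$-coloring of the positive integers that admits no monochromatic $(a,b)$-triple (i.e., $(a,b)$ is not regular). -/
/-!
Every `(a, b)`-triple `(x, y, z)` satisfies `c * x + 2 * y = z` with `c = b - 2a`. As in the easy
direction of Rado's theorem, fix a prime `p > |c| + 2` and color `n` by its last nonzero digit in
base `p`. In a monochromatic solution with common digit `u ≠ 0`, dividing out a common power of `p`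
leaves each of `x, y, z` congruent to `0` or `u` mod `p`, not all `0`; so `p` divides a nonempty
partial sum of the coefficients `c, 2, -1`. These partial sums are `c, 2, -1, c + 2, c - 1, 1, c + 1`,
all smaller than `p` in absolute value, and the hypothesis says that they are nonzero, except
possibly `c` itself. If `c = 0`, the value of `x` is irrelevant and can be replaced by `y`, so that
the partial sum consisting of `c` alone does not arise.
-/

/-- The last nonzero digit of `n` in base `p`, as a residue mod `p` (and `0` for `n = 0`). -/
def lastDigit (p n : ℕ) : ZMod p := ((n / p ^ n.factorization p : ℕ) : ZMod p)

lemma lastDigit_ne_zero {p n : ℕ} (hp : p.Prime) (hn : 0 < n) : lastDigit p n ≠ 0 := by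
  unfold lastDigit
  rw [Ne, ZMod.natCast_eq_zero_iff]
  exact Nat.not_dvd_ordCompl hp hn.ne'

lemma lastDigit_mul {p n : ℕ} (hp : p.Prime) (hn : 0 < n) :
    lastDigit p (p * n) = lastDigit p n := by
  unfold lastDigit
  rw [Nat.factorization_mul hp.ne_zero hn.ne', Finsupp.add_apply, hp.factorization_self,
    pow_add, pow_one, Nat.mul_div_mul_left _ _ hp.pos]

lemma lastDigit_of_not_dvd {p n : ℕ} (h : ¬ p ∣ n) : lastDigit p n = n := by
  unfold lastDigit
  rw [Nat.factorization_eq_zero_of_not_dvd h, pow_zero, Nat.div_one]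

/-- There is no monochromatic solution of `c * x + 2 * y = z` under `lastDigit p`. The disjunction
`hx` covers the degenerate coefficient `c = 0`, where `x` may be taken equal to `y`. -/
lemma no_mono_solution {p : ℕ} (hp : p.Prime) (c : ℤ) (h2 : ¬ (p : ℤ) ∣ 2)
    (h3 : ¬ (p : ℤ) ∣ c + 2) (h4 : ¬ (p : ℤ) ∣ c - 1) (h5 : ¬ (p : ℤ) ∣ c + 1)
    (N : ℕ) : ∀ x y z : ℕ, x ≤ N → 0 < x → 0 < y → 0 < z → (¬ (p : ℤ) ∣ c ∨ x = y) →
      c * x + 2 * y = z → lastDigit p x = lastDigit p y → lastDigit p y = lastDigit p z →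
      False := by
  haveI := Fact.mk hp
  induction N with
  | zero => intro x y z h h'; omega
  | succ N ih =>
    intro x y z hN x0 y0 z0 hx he hxy hyz
    by_cases hall : p ∣ x ∧ p ∣ y ∧ p ∣ z
    · obtain ⟨⟨x, rfl⟩, ⟨y, rfl⟩, ⟨z, rfl⟩⟩ := hall
      have x0 := Nat.pos_of_mul_pos_left x0
      have y0 := Nat.pos_of_mul_pos_left y0
      have z0 := Nat.pos_of_mul_pos_left z0
      rw [lastDigit_mul hp x0, lastDigit_mul hp y0] at hxy
      rw [lastDigit_mul hp y0, lastDigit_mul hp z0] at hyz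
      refine ih x y z ?_ x0 y0 z0 ?_ ?_ hxy hyz
      · nlinarith [hp.two_le]
      · exact hx.imp_right fun h => Nat.eq_of_mul_eq_mul_left hp.pos h
      · have hp0 : (p : ℤ) ≠ 0 := by exact_mod_cast hp.ne_zero
        apply mul_left_cancel₀ hp0
        push_cast at he
        linarith
    · have hu := lastDigit_ne_zero hp x0
      have key : ∀ n : ℕ, lastDigit p x = lastDigit p n →
          p ∣ n ∧ (n : ZMod p) = 0 ∨ ¬ p ∣ n ∧ (n : ZMod p) = lastDigit p x := by
        intro n hn
        by_cases h : p ∣ n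
        · exact .inl ⟨h, (ZMod.natCast_eq_zero_iff n p).2 h⟩
        · exact .inr ⟨h, by rw [hn, lastDigit_of_not_dvd h]⟩
      have he' : (c : ZMod p) * x + 2 * y = z := by exact_mod_cast congrArg (Int.cast : ℤ → ZMod p) he
      -- A partial sum of the coefficients that annihilates the common digit is divisible by `p`.
      have kill : ∀ m : ℤ, (m : ZMod p) * lastDigit p x = 0 → (p : ℤ) ∣ m := fun m hm =>
        (ZMod.intCast_zmod_eq_zero_iff_dvd m p).1 ((mul_eq_zero.1 hm).resolve_right hu)
      have h1 : ¬ (p : ℤ) ∣ 1 := by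
        intro h
        exact h2 (h.trans (one_dvd 2))
      rcases key x rfl with ⟨dx, ex⟩ | ⟨dx, ex⟩ <;> rcases key y hxy with ⟨dy, ey⟩ | ⟨dy, ey⟩ <;>
        rcases key z (hxy.trans hyz) with ⟨dz, ez⟩ | ⟨dz, ez⟩ <;> rw [ex, ey, ez] at he'
      · exact hall ⟨dx, dy, dz⟩
      · exact h1 (kill 1 (by push_cast; linear_combination -he'))
      · exact h2 (kill 2 (by push_cast; linear_combination he'))
      · exact h1 (kill 1 (by push_cast; linear_combination he'))
      · rcases hx with hc | rfl
        · exact hc (kill c (by linear_combination he'))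
        · exact dx dy
      · exact h4 (kill (c - 1) (by push_cast; linear_combination he'))
      · exact h3 (kill (c + 2) (by push_cast; linear_combination he'))
      · exact h5 (kill (c + 1) (by push_cast; linear_combination he'))

/-- If `b - 2a ∉ {-2, -1, 1}`, then `(a,b)` is not regular. -/
theorem not_regular_of_rado (a b : ℕ) (ha : 1 ≤ a) (hab : a ≤ b)
    (h : (b : ℤ) - 2 * a ∉ ({-2, -1, 1} : Set ℤ)) :
    ∃ r : ℕ, 1 ≤ r ∧ ∃ χ : ℕ → Fin r, ∀ x d : ℕ, 0 < x → 0 < d →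
      ¬(χ x = χ (a * x + d) ∧ χ (a * x + d) = χ (b * x + 2 * d)) := by
  obtain ⟨c, hc⟩ : ∃ c : ℤ, c = (b : ℤ) - 2 * a := ⟨_, rfl⟩
  rw [← hc] at h
  simp only [Set.mem_insert_iff, Set.mem_singleton_iff, not_or] at h
  obtain ⟨p, hpc, hp⟩ := Nat.exists_infinite_primes (c.natAbs + 3)
  haveI := Fact.mk hp
  have small : ∀ m : ℤ, m ≠ 0 → m.natAbs < p → ¬ (p : ℤ) ∣ m := fun m hm hlt hd =>
    hm (Int.eq_zero_of_dvd_of_natAbs_lt_natAbs hd (by simpa using hlt))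
  have main := no_mono_solution hp c (small 2 (by omega) (by omega))
    (small (c + 2) (by omega) (by omega)) (small (c - 1) (by omega) (by omega))
    (small (c + 1) (by omega) (by omega))
  refine ⟨p, hp.one_lt.le, fun n => ⟨(lastDigit p n).val, ZMod.val_lt _⟩, ?_⟩
  rintro x d x0 d0 ⟨h1, h2⟩
  have h1 := ZMod.val_injective p (Fin.mk.inj h1)
  have h2 := ZMod.val_injective p (Fin.mk.inj h2)
  have he : c * x + 2 * (a * x + d : ℕ) = (b * x + 2 * d : ℕ) := by
    rw [hc]; push_cast; ring
  by_cases c0 : c = 0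
  · subst c0
    exact main _ (a * x + d) (a * x + d) (b * x + 2 * d) le_rfl (by omega) (by omega) (by omega)
      (.inr rfl) (by simpa using he) rfl h2
  · exact main _ x (a * x + d) (b * x + 2 * d) le_rfl x0 (by omega) (by omega)
      (.inl (small c c0 (by omega))) he h1 h2
end

section
/- Let $a, i, c$ be integers with $a \ge 2$ and $c \ge 5$, and set $p = 2 - \tfrac{2}{c}$ (a real number). Suppose $a \le \tfrac{p^c}{c-1}$ and $0 \le i \le p^c(p^{c-1} - 2)$. Then the coloring $\gamma_c$ admits no monochromatic $(a, a+i)$-triple; in particular there exists a $c$-coloring of the positive integers with no monochromatic $(a, a+i)$-triple, so $\mathrm{dor}(a, a+i) \le c-1$. -/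
/-!
Write `p = 2 - 2/c` and let `k`, `m`, `l` be the levels of `x`, `y = a x + d` and
`z = (a + i) x + 2 d`, the level of `n` being the exponent `j` with `p^j ≤ n < p^(j+1)`.
Suppose the three colors agree, so that the levels are congruent modulo `c`.
Since `y > 2 x > p x`, the level of `y` exceeds that of `x`, hence `m ≥ k + c`. Also `z > y`, so
either `l = m` or `l ≥ m + c`. As `z = 2 y - a x + i x`, both cases fail:

* if `l = m`, then `a x ≥ 2 y - z > (2 - p) p^m`, whereas `a x < p^(c+k+1) / (c-1) ≤ (2 - p) p^m`
  because `p / (c-1) = 2/c = 2 - p`;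
* if `l ≥ m + c`, then `z ≥ p^(m+c)`, whereas the bound on `i` gives
  `z < 2 y + i x < 2 p^(m+1) + p^(k+c+1) (p^(c-1) - 2) ≤ p^(m+c)`.
-/


/-- The coloring `γ_c`: a positive integer `n` receives color `k mod c`, where `k`
is the unique nonnegative integer with `p^k ≤ n < p^(k+1)` and `p = 2 - 2/c`,
i.e. `k = ⌊log_p n⌋`. -/
noncomputable def vdwGamma (c : ℕ) (n : ℕ) : ℕ :=
  (⌊Real.logb (2 - 2 / (c : ℝ)) (n : ℝ)⌋).toNat % c

/-- The color of a positive integer `n` is the residue modulo `c` of its level `k`. -/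
lemma vdwGamma_level {c n : ℕ} (hp : 1 < 2 - 2 / (c : ℝ)) (hn : 0 < n) :
    ∃ k : ℕ, vdwGamma c n = k % c ∧ (2 - 2 / (c : ℝ)) ^ k ≤ n ∧
      (n : ℝ) < (2 - 2 / (c : ℝ)) ^ (k + 1) := by
  have hn' : (1 : ℝ) ≤ n := by exact_mod_cast hn
  have hn0 : (0 : ℝ) < n := by linarith
  obtain ⟨k, h1, h2⟩ := exists_nat_pow_near hn' hp
  refine ⟨k, ?_, h1, h2⟩
  have hfl : ⌊Real.logb (2 - 2 / (c : ℝ)) (n : ℝ)⌋ = (k : ℤ) := by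
    rw [Int.floor_eq_iff]
    constructor
    · rw [Real.le_logb_iff_rpow_le hp hn0]
      exact_mod_cast h1
    · rw [Real.logb_lt_iff_lt_rpow hp hn0]
      exact_mod_cast h2
  rw [vdwGamma, hfl, Int.toNat_natCast]

/-- Distinct levels that are congruent modulo `c` are at least `c` apart. -/
lemma add_le_of_mod_eq_of_lt {c u v : ℕ} (h : u % c = v % c) (huv : u < v) : u + c ≤ v := by
  have h1 : c ∣ v - u := (Nat.modEq_iff_dvd' huv.le).mp h
  have := Nat.le_of_dvd (by omega) h1
  omega

lemma no_mono_vdwGamma (a i c : ℕ) (ha : 2 ≤ a) (hc : 5 ≤ c)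
    (hA : (a : ℝ) ≤ (2 - 2 / (c : ℝ)) ^ c / ((c : ℝ) - 1))
    (hI : (i : ℝ) ≤ (2 - 2 / (c : ℝ)) ^ c * ((2 - 2 / (c : ℝ)) ^ (c - 1) - 2))
    (x d : ℕ) (hx : 0 < x) (hd : 0 < d) :
    ¬(vdwGamma c x = vdwGamma c (a * x + d) ∧
        vdwGamma c (a * x + d) = vdwGamma c ((a + i) * x + 2 * d)) := by
  rintro ⟨hxy, hyz⟩
  have hc' : (5 : ℝ) ≤ c := by exact_mod_cast hc
  have hc0 : (0 : ℝ) < c := by linarith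
  have hc1 : (0 : ℝ) < (c : ℝ) - 1 := by linarith
  have hp : 1 < 2 - 2 / (c : ℝ) := by
    have : 2 / (c : ℝ) < 1 := by rw [div_lt_one hc0]; linarith
    linarith
  have hp2 : 2 - 2 / (c : ℝ) < 2 := by
    have : 0 < 2 / (c : ℝ) := by positivity
    linarith
  have hpc : 2 - 2 / (c : ℝ) = (2 - (2 - 2 / (c : ℝ))) * ((c : ℝ) - 1) := by
    field_simp
    ring
  obtain ⟨k, hk, hk1, hk2⟩ := vdwGamma_level hp hx
  obtain ⟨m, hm, hm1, hm2⟩ := vdwGamma_level (n := a * x + d) hp (by omega)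
  obtain ⟨l, hl, hl1, hl2⟩ := vdwGamma_level (n := (a + i) * x + 2 * d) hp (by omega)
  rw [hk, hm] at hxy
  rw [hm, hl] at hyz
  push_cast at hm1 hm2 hl1 hl2
  generalize 2 - 2 / (c : ℝ) = p at *
  have hp0 : 0 < p := by linarith
  have haR : (2 : ℝ) ≤ a := by exact_mod_cast ha
  have hxR : (0 : ℝ) < x := by exact_mod_cast hx
  have hdR : (0 : ℝ) < d := by exact_mod_cast hd
  have hiR : (0 : ℝ) ≤ i := Nat.cast_nonneg i
  have hix : (0 : ℝ) ≤ i * x := by positivity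
  have hax : (2 : ℝ) * x ≤ a * x := by gcongr
  have hkm : k < m := by
    have h : p ^ (k + 1) < p ^ (m + 1) := by
      rw [pow_succ]
      nlinarith
    have := (pow_lt_pow_iff_right₀ hp).mp h
    omega
  have hkm' := add_le_of_mod_eq_of_lt hxy hkm
  have hml : m ≤ l := by
    have h : p ^ m < p ^ (l + 1) := by nlinarith
    have := (pow_lt_pow_iff_right₀ hp).mp h
    omega
  have hpow : p ^ (k + c) ≤ p ^ m := pow_le_pow_right₀ hp.le hkm'
  rcases hml.eq_or_lt with rfl | hlt
  · have hA' : a * ((c : ℝ) - 1) ≤ p ^ c := (le_div_iff₀ hc1).mp hA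
    have h1 : a * ((c : ℝ) - 1) * x < p ^ c * p ^ (k + 1) :=
      mul_lt_mul' hA' hk2 hxR.le (by positivity)
    have h2 : p ^ c * p ^ (k + 1) ≤ p * p ^ m := by
      calc p ^ c * p ^ (k + 1) = p * p ^ (k + c) := by ring
        _ ≤ p * p ^ m := by gcongr
    have h3 : (2 - p) * p ^ m < a * x := by
      rw [pow_succ] at hl2
      nlinarith
    have h4 : (2 - p) * p ^ m * ((c : ℝ) - 1) < a * x * ((c : ℝ) - 1) := by gcongr
    have h5 : p * p ^ m = (2 - p) * p ^ m * ((c : ℝ) - 1) := by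
      calc p * p ^ m = (2 - p) * ((c : ℝ) - 1) * p ^ m := by rw [← hpc]
        _ = _ := by ring
    linarith
  · have hml' := add_le_of_mod_eq_of_lt hyz hlt
    have h1 : p ^ (m + c) ≤ p ^ l := pow_le_pow_right₀ hp.le hml'
    obtain ⟨e, rfl⟩ : ∃ e, c = e + 1 := ⟨c - 1, by omega⟩
    rw [Nat.add_sub_cancel] at hI
    -- `0 ≤ i` forces the second factor of the bound on `i` to be nonnegative.
    have hq : 0 ≤ p ^ e - 2 :=
      nonneg_of_mul_nonneg_right (hiR.trans hI) (by positivity)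
    have h2 : (i : ℝ) * x ≤ p * p ^ m * (p ^ e - 2) := by
      calc (i : ℝ) * x ≤ p ^ (e + 1) * (p ^ e - 2) * p ^ (k + 1) := by gcongr
        _ = p * p ^ (k + (e + 1)) * (p ^ e - 2) := by ring
        _ ≤ p * p ^ m * (p ^ e - 2) := by gcongr
    have h3 : p ^ (m + (e + 1)) = p * p ^ m * (p ^ e - 2) + 2 * p ^ (m + 1) := by ring
    nlinarith

/-- Theorem 2: for `a ≥ 2`, `c ≥ 5`, `p = 2 - 2/c`, if `a ≤ p^c/(c-1)` and
`0 ≤ i ≤ p^c (p^(c-1) - 2)`, then `γ_c` admits no monochromatic `(a, a+i)`-triple;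
in particular some `c`-coloring admits none, so `dor(a, a+i) ≤ c - 1`. -/
theorem dor_le_of_gamma (a i c : ℕ) (ha : 2 ≤ a) (hc : 5 ≤ c)
    (hA : (a : ℝ) ≤ (2 - 2 / (c : ℝ)) ^ c / ((c : ℝ) - 1))
    (hI : (i : ℝ) ≤ (2 - 2 / (c : ℝ)) ^ c * ((2 - 2 / (c : ℝ)) ^ (c - 1) - 2)) :
    (∀ x d : ℕ, 0 < x → 0 < d →
      ¬(vdwGamma c x = vdwGamma c (a * x + d) ∧
        vdwGamma c (a * x + d) = vdwGamma c ((a + i) * x + 2 * d))) ∧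
    ∃ χ : ℕ → Fin c, ∀ x d : ℕ, 0 < x → 0 < d →
      ¬(χ x = χ (a * x + d) ∧ χ (a * x + d) = χ ((a + i) * x + 2 * d)) := by
  refine ⟨no_mono_vdwGamma a i c ha hc hA hI, ?_⟩
  refine ⟨fun n => ⟨vdwGamma c n, Nat.mod_lt _ (by omega)⟩, fun x d hx hd h => ?_⟩
  exact no_mono_vdwGamma a i c ha hc hA hI x d hx hd
    ⟨congrArg Fin.val h.1, congrArg Fin.val h.2⟩
end

section
/- Let $a, j$ be integers with $a \ge 1$ and $1 \le j \le 5$. Then there exists a $5$-coloring of the positive integers with no monochromatic $(a, 2a+j)$-triple; equivalently, $\mathrm{dor}(a, 2a+j) \le 4$. -/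
/-!
In an `(a, 2a+j)`-triple put `y = ax + d` and `z = (2a+j)x + 2d`. Then `z = 2y + jx`, and `x ≤ y`
because `a ≥ 1`, so `2y ≤ z ≤ (2+j)y < 8y`. Hence the integer part of `log₂ z` exceeds that of
`log₂ y` by 1, 2 or 3, and colouring `n` by `⌊log₂ n⌋ mod 5` always separates `y` from `z`.
-/

/-- Corollary 1: for `a ≥ 1` and `1 ≤ j ≤ 5`, `dor(a, 2a+j) ≤ 4`: some
`5`-coloring of the positive integers has no monochromatic `(a, 2a+j)`-triple. -/
theorem dor_a_2a_add_j_le_four (a j : ℕ) (ha : 1 ≤ a) (hj1 : 1 ≤ j) (hj5 : j ≤ 5) :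
    ∃ χ : ℕ → Fin 5, ∀ x d : ℕ, 0 < x → 0 < d →
      ¬(χ x = χ (a * x + d) ∧ χ (a * x + d) = χ ((2 * a + j) * x + 2 * d)) := by
  refine ⟨fun n => ⟨Nat.log 2 n % 5, Nat.mod_lt _ (by norm_num)⟩, ?_⟩
  rintro x d hx hd ⟨-, h⟩
  have hxy : x ≤ a * x := Nat.le_mul_of_pos_left x ha
  have hjx : j * x ≤ 5 * x := Nat.mul_le_mul_right x hj5
  have hz : (2 * a + j) * x + 2 * d = 2 * (a * x + d) + j * x := by ring
  rw [hz] at h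
  obtain ⟨y, hy⟩ : ∃ y, y = a * x + d := ⟨_, rfl⟩
  rw [← hy] at h
  have hmod : Nat.log 2 y % 5 = Nat.log 2 (2 * y + j * x) % 5 := congrArg Fin.val h
  have hlow : Nat.log 2 y + 1 ≤ Nat.log 2 (2 * y + j * x) := by
    rw [← Nat.log_mul_base (by norm_num) (by omega : y ≠ 0)]
    exact Nat.log_mono_right (by omega)
  have hup : Nat.log 2 (2 * y + j * x) < Nat.log 2 y + 4 := by
    apply Nat.log_lt_of_lt_pow (by omega)
    have hlt : y < 2 ^ (Nat.log 2 y + 1) := Nat.lt_pow_succ_log_self (by norm_num) y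
    have hpow : 2 ^ (Nat.log 2 y + 4) = 8 * 2 ^ (Nat.log 2 y + 1) := by ring
    omega
  omega
end

section
/- Every $3$-coloring of the integer interval $\{1, 2, \ldots, 88\}$ admits a monochromatic $(2,2)$-triple, i.e., positive integers $x, d$ with $2x + d \le 88$ and $2x + 2d \le 88$ such that $x$, $2x+d$, and $2x+2d$ all receive the same color. -/
/-!
The theorem is a finite statement: no map `{1, …, 88} → Fin 3` avoids monochromatic triples. It is
proved by an exhaustive search that branches on the colour of one number at a time and closes a
branch as soon as a number would get a colour in which it completes a triple with two numbers
coloured before. The search has several tens of thousands of nodes and is evaluated by the kernel,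
so all of its data are natural numbers used as bit vectors. Each colour has one word, holding the
set of its members in several shifted, dilated and reflected copies, together with the set of
numbers that may no longer take the colour. When a number is coloured, all the numbers it newly
forbids are found by a few shifts of these copies.

Soundness (`search_eq_false`) rests on one invariant, `Good`: every bit set in a word is a true
assertion about the given colouring. Since all nodes try all three colours of the number at which
they branch, soundness does not depend on how that number is chosen, and nothing has to be proved
about the heuristic `pick`.

Permuting the colours allows one to assume that `18`, `8`, `3`, `1` receive, in this order, colours
numbered by first appearance (`starts_cover`). This leaves fourteen searches, all of which
succeed (`run_eq_true`).
-/

namespace TwoTwo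

noncomputable section

/-! ### Bit vectors and the words of the colours -/

-- The kernel evaluates these functions on numerals by built-in arithmetic. They are applied directly
-- here, which spares it the unfolding of the instances behind `|||`, `&&&` and so on.
local infixl:55 " .|. " => Nat.lor
local infixl:60 " .&. " => Nat.land
local infixl:58 " .^. " => Nat.xor
local infixl:75 " <<. " => Nat.shiftLeft
local infixl:75 " >>. " => Nat.shiftRight

/-- `force n k` equals `k n`. The recursion on `n` makes the kernel reduce `n` to a numeral before
it substitutes `n` into `k`, so that `n` is computed only once. -/
def force {α : Type} (n : ℕ) (k : ℕ → α) : α :=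
  Nat.rec (k 0) (fun m _ => k (Nat.succ m)) n

/-- The word `P` with the assertion that `i` does not have its colour. -/
def ban (P i : ℕ) : ℕ := P .|. 1 <<. i

/-- The bits which record that `i` has the colour of a word. The word of the colour `c` consists of
fields that start at the positions

* `0`: bit `j` says that `j` does not have colour `c`;
* `192`: bit `j` says that `j` has colour `c`;
* `384`: bit `2y` says that `y` has colour `c`;
* `576`: bit `h` says that `2h` has colour `c`;
* `768`: bit `88 - h` says that `2h` has colour `c`;
* `960`: bit `176 - 2x` says that `x` has colour `c`.

The fields at `576` and `768` are set by `marksEven`. -/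
def marks (i : ℕ) : ℕ :=
  1 <<. (192 + i) .|. (1 <<. (384 + 2 * i) .|. 1 <<. (1136 - 2 * i))

/-- The bits of the fields at `576` and `768` which record that `2h` has the colour of a word. -/
def marksEven (h : ℕ) : ℕ := 1 <<. (576 + h) .|. 1 <<. (856 - h)

/-- The numbers forbidden by a new member `i` as the `x` of a triple `(x, y, z)`; only the bits
at `1, …, 88` are meaningful. -/
def forbidX (P i : ℕ) : ℕ :=
  (P >>. (577 + i)) <<. (2 * i + 1) .|. (P >>. (4 * i + 386)) <<. (2 * i + 2)

/-- The numbers forbidden by a new member `i` as the `y` of a triple `(x, y, z)`; only the bits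
at `1, …, 88` are meaningful. -/
def forbidY (P i : ℕ) : ℕ :=
  (P >>. (1137 - i)) <<. (i + 1) .|. (P >>. (856 - i)) % 2 ^ ((i + 1) / 2)

/-- The numbers forbidden by a new member `2h` as the `z` of a triple `(x, y, z)`. -/
def forbidZ (P h : ℕ) : ℕ :=
  ((P >>. 192) % 2 ^ h) <<. h .|. (P >>. (192 + h)) % 2 ^ h

/-- The word `P` after `i` has got its colour, without the consequences of `i` being even. -/
def assignBasic (P i : ℕ) : ℕ :=
  P .|. (marks i .|. (forbidX P i .|. forbidY P i) % 2 ^ 192)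

/-- The word `P` after `i = 2h` has got its colour. -/
def assignEven (P i h : ℕ) : ℕ := assignBasic P i .|. (marksEven h .|. forbidZ P h)

/-- The word `P` after `i` has got its colour. -/
def assign (P i : ℕ) : ℕ :=
  bif Nat.beq (i % 2) 0 then assignEven P i (i / 2) else assignBasic P i

/-- Whether bit `i` of `m` is set. -/
def bit (m i : ℕ) : Bool := Nat.beq ((m >>. i) % 2) 1

/-! ### The choice of the number to branch at -/

/-- The order in which numbers are tried when nothing is forced. -/
def order : List ℕ :=
  [1, 24, 38, 2, 32, 4, 10, 40, 52, 6, 48, 30, 26, 28, 60, 14, 44, 22, 12, 20, 16, 42, 80, 62, 56,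
   50, 36, 34, 76, 46, 68, 84, 54, 64, 66, 72, 58, 88, 8, 82, 70, 78, 74, 18, 86, 3, 5, 7, 9, 11,
   13, 15, 17, 19, 21, 23, 25, 27, 29, 31, 33, 35, 37, 39, 41, 43, 45, 47, 49, 51, 53, 55, 57, 59,
   61, 63, 65, 67, 69, 71, 73, 75, 77, 79, 81, 83, 85, 87]

/-- The first entry of a list that belongs to the set `m`. -/
def firstIn (m : ℕ) : List ℕ → ℕ
  | [] => 0
  | i :: l => bif bit m i then i else firstIn m l

/-- The number with digit `j` at position `2 ^ j % 101` in base `128`, for each `j < k`. -/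
def logTable : ℕ → ℕ
  | 0 => 0
  | k + 1 => logTable k .|. k <<. (7 * (2 ^ k % 101))

/-- The table of discrete logarithms modulo `101` up to `88`. Since `2` is a primitive root modulo
`101`, its entries do not collide. -/
def dlog : ℕ := logTable 89

/-- The least element of a nonempty set `m ⊆ {0, …, 88}`: the expression in `m` that is reduced
modulo `101` is the lowest set bit of `m`. -/
def low (m : ℕ) : ℕ := (dlog >>. (7 * ((m .&. ((m .^. (2 ^ 89 - 1)) + 1)) % 101))) % 128

/-- The set `{1, …, 88}`. -/
def full : ℕ := 2 ^ 89 - 2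

/-- The numbers without a colour. -/
def free (a b c : ℕ) : ℕ := full .^. (full .&. ((a .|. (b .|. c)) >>. 192))

/-- The numbers for which all three colours are forbidden. -/
def three (a b c : ℕ) : ℕ := full .&. (a .&. (b .&. c))

/-- The elements of `f` for which at least two colours are forbidden. -/
def two (f a b c : ℕ) : ℕ := f .&. (a .&. b .|. (a .|. b) .&. c)

/-- The elements of `f` for which at least one colour is forbidden. -/
def one (f a b c : ℕ) : ℕ := f .&. (a .|. (b .|. c))

/-- The first element of `v` in `order`, or of `f` if `v` is empty. -/
def pickFree (f v : ℕ) : ℕ := bif Nat.beq v 0 then firstIn f order else firstIn v order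

/-- The least element of `u`, the set of numbers with a single colour left, if there is one. -/
def pickOne (a b c f u : ℕ) : ℕ :=
  bif Nat.beq u 0 then force (one f a b c) (pickFree f) else low u

/-- The choice of `pick` when no number has all its colours forbidden; `f` is the set of numbers
without a colour. -/
def pickTwo (a b c f : ℕ) : ℕ := force (two f a b c) (pickOne a b c f)

/-- The least element of `t`, the set of numbers with no colour left, if there is one. -/
def pickThree (a b c t : ℕ) : ℕ :=
  bif Nat.beq t 0 then force (free a b c) (pickTwo a b c) else low t

/-- The number to branch at: one with as few remaining colours as possible. -/
def pick (a b c : ℕ) : ℕ := force (three a b c) (pickThree a b c)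

/-! ### The search -/

/-- `f a b c`, with `c` evaluated first. -/
def call₃ (f : ℕ → ℕ → ℕ → Bool) (a b c : ℕ) : Bool := force c (f a b)

/-- `f a b c`, with `b` and `c` evaluated first. -/
def call₂ (f : ℕ → ℕ → ℕ → Bool) (c a b : ℕ) : Bool := force b fun b => call₃ f a b c

/-- `f a b c`, with `a`, `b` and `c` evaluated first. -/
def call (f : ℕ → ℕ → ℕ → Bool) (a b c : ℕ) : Bool := force a fun a => call₂ f c a b

/-- The number `i` can take none of the three colours: each is forbidden, or refuted by `f`. -/
def branch (f : ℕ → ℕ → ℕ → Bool) (a b c i : ℕ) : Bool :=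
  (Nat.ble 1 i && Nat.ble i 88) &&
  ((bit a i || call f (assign a i) (ban b i) (ban c i)) &&
  ((bit b i || call f (ban a i) (assign b i) (ban c i)) &&
  (bit c i || call f (ban a i) (ban b i) (assign c i))))

/-- One node of the search, with `f` as the search below it. -/
def step (f : ℕ → ℕ → ℕ → Bool) (a b c : ℕ) : Bool := force (pick a b c) (branch f a b c)

/-- Whether the partial colouring with words `a`, `b`, `c` is refuted within depth `n`. -/
def search (n : ℕ) : ℕ → ℕ → ℕ → Bool :=
  Nat.rec (fun _ _ _ => false) (fun _ f => step f) n

/-! ### Soundness of the bookkeeping -/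

/-- The colouring `χ` has no monochromatic `(2,2)`-triple in `{1, …, 88}`. Putting `y = 2x + d` and
`z = 2x + 2d`, the triples are the solutions of `z + 2x = 2y` with `x > 0` and `y > 2x`. -/
def TripleFree (χ : ℕ → Fin 3) : Prop :=
  ∀ x y z, 0 < x → 2 * x < y → z + 2 * x = 2 * y → z ≤ 88 → χ x = χ y → χ y = χ z → False

/-- What a set bit at position `k` of the word of the colour `c` asserts about the colouring `χ`, one
clause for each field of the word. -/
structure Meaning (χ : ℕ → Fin 3) (c : Fin 3) (k : ℕ) : Prop where
  forbidden : 0 < k → k ≤ 88 → χ k ≠ c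
  mem : ∀ j < 192, k = 192 + j → 0 < j ∧ χ j = c
  double : ∀ j < 192, k = 384 + j → ∃ y, j = 2 * y ∧ χ y = c
  half : ∀ j < 192, k = 576 + j → 2 * j ≤ 88 ∧ χ (2 * j) = c
  revHalf : ∀ j < 192, k = 768 + j → ∃ h, j + h = 88 ∧ 2 * h ≤ 88 ∧ χ (2 * h) = c
  revDouble : ∀ j, k = 960 + j → ∃ x, 0 < x ∧ j + 2 * x = 176 ∧ χ x = c

/-- Every assertion recorded in the word `P` of the colour `c` is true of `χ`. -/
def Good (χ : ℕ → Fin 3) (c : Fin 3) (P : ℕ) : Prop :=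
  ∀ k, P.testBit k = true → Meaning χ c k

theorem testBit_lor (P Q k : ℕ) : (P .|. Q).testBit k = (P.testBit k || Q.testBit k) :=
  Nat.testBit_or P Q k

theorem testBit_shl (P i k : ℕ) :
    (P <<. i).testBit k = (decide (i ≤ k) && P.testBit (k - i)) :=
  Nat.testBit_shiftLeft P

theorem testBit_shr (P i k : ℕ) : (P >>. i).testBit k = P.testBit (i + k) :=
  Nat.testBit_shiftRight P

theorem testBit_bitAt (i k : ℕ) : (1 <<. i).testBit k = decide (i = k) := by
  change (1 <<< i).testBit k = _
  rw [Nat.one_shiftLeft, Nat.testBit_two_pow]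

variable {χ : ℕ → Fin 3} {c : Fin 3} {P Q i h : ℕ}

theorem Good.lor (hP : Good χ c P) (hQ : Good χ c Q) : Good χ c (P .|. Q) := by
  intro k hk
  rw [testBit_lor, Bool.or_eq_true] at hk
  exact hk.elim (hP k) (hQ k)

theorem good_bitAt (hi : Meaning χ c i) : Good χ c (1 <<. i) := by
  intro k hk
  rw [testBit_bitAt, decide_eq_true_eq] at hk
  exact hk ▸ hi

/-- A bit of the lowest field asserts nothing but `χ i ≠ c`, and this only for `1 ≤ i ≤ 88`. -/
theorem Meaning.of_ne (hi : i < 192) (hc : 0 < i → i ≤ 88 → χ i ≠ c) : Meaning χ c i where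
  forbidden := hc
  mem := by omega
  double := by omega
  half := by omega
  revHalf := by omega
  revDouble := by omega

theorem Good.ban (hP : Good χ c P) (hi : i ≤ 88) (hc : χ i ≠ c) : Good χ c (ban P i) :=
  hP.lor (good_bitAt (.of_ne (by omega) fun _ _ => hc))

theorem good_marks (hi₀ : 0 < i) (hi : i ≤ 88) (hc : χ i = c) : Good χ c (marks i) := by
  refine (good_bitAt ?_).lor ((good_bitAt ?_).lor (good_bitAt ?_))
  · refine ⟨by omega, fun j _ hk => ?_, by omega, by omega, by omega, by omega⟩
    obtain rfl : i = j := by omega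
    exact ⟨hi₀, hc⟩
  · exact ⟨by omega, by omega, fun j _ hk => ⟨i, by omega, hc⟩, by omega, by omega, by omega⟩
  · exact ⟨by omega, by omega, by omega, by omega, by omega,
      fun j hk => ⟨i, hi₀, by omega, hc⟩⟩

theorem good_marksEven (hh : 2 * h ≤ 88) (hc : χ (2 * h) = c) : Good χ c (marksEven h) := by
  refine (good_bitAt ?_).lor (good_bitAt ?_)
  · refine ⟨by omega, by omega, by omega, fun j _ hk => ?_, by omega, by omega⟩
    obtain rfl : h = j := by omega
    exact ⟨hh, hc⟩
  · exact ⟨by omega, by omega, by omega, by omega,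
      fun j _ hk => ⟨h, by omega, hh, hc⟩, by omega⟩

/-- A new member `i` in the role of `x`: the forbidden numbers are the `y` whose `z = 2 (y - i)` has
colour `c`, and the `z = 2y - 2i` whose `y` has colour `c`. -/
theorem forbidX_sound (hχ : TripleFree χ) (hP : Good χ c P) (hi₀ : 0 < i) (hc : χ i = c) {k : ℕ}
    (hk : (forbidX P i).testBit k = true) (hk' : k ≤ 88) : χ k ≠ c := by
  intro hkc
  simp only [forbidX, testBit_lor, testBit_shl, testBit_shr, Bool.or_eq_true, Bool.and_eq_true,
    decide_eq_true_eq] at hk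
  obtain ⟨h₁, h₂⟩ | ⟨h₁, h₂⟩ := hk
  · obtain ⟨h₃, h₄⟩ := (hP _ h₂).half (k - i) (by omega) (by omega)
    exact hχ i k (2 * (k - i)) hi₀ (by omega) (by omega) h₃ (by rw [hc, hkc]) (by rw [hkc, h₄])
  · obtain ⟨y, h₃, h₄⟩ := (hP _ h₂).double (2 * i + k) (by omega) (by omega)
    exact hχ i y k hi₀ (by omega) (by omega) hk' (by rw [hc, h₄]) (by rw [h₄, hkc])

/-- A new member `i` in the role of `y`: the forbidden numbers are the `z = 2i - 2x` whose `x` has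
colour `c`, and the `x = i - h` whose `z = 2h` has colour `c`. -/
theorem forbidY_sound (hχ : TripleFree χ) (hP : Good χ c P) (hi : i ≤ 88) (hc : χ i = c) {k : ℕ}
    (hk : (forbidY P i).testBit k = true) (hk₀ : 0 < k) (hk' : k ≤ 88) : χ k ≠ c := by
  intro hkc
  simp only [forbidY, testBit_lor, testBit_shl, testBit_shr, Nat.testBit_mod_two_pow,
    Bool.or_eq_true, Bool.and_eq_true, decide_eq_true_eq] at hk
  obtain ⟨h₁, h₂⟩ | ⟨h₁, h₂⟩ := hk
  · obtain ⟨x, h₀, h₃, h₄⟩ := (hP _ h₂).revDouble (176 + k - 2 * i) (by omega)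
    exact hχ x i k h₀ (by omega) (by omega) hk' (by rw [hc, h₄]) (by rw [hc, hkc])
  · obtain ⟨h, h₃, h₄, h₅⟩ := (hP _ h₂).revHalf (88 - i + k) (by omega) (by omega)
    exact hχ k i (2 * h) hk₀ (by omega) (by omega) h₄ (by rw [hc, hkc]) (by rw [hc, h₅])

/-- A new member `2h` in the role of `z`: here `y = x + h`, with `x < h`, and if one of `x`, `y` has
colour `c` then the other is forbidden. -/
theorem good_forbidZ (hχ : TripleFree χ) (hP : Good χ c P) (hh : 2 * h ≤ 88)
    (hc : χ (2 * h) = c) : Good χ c (forbidZ P h) := by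
  intro k hk
  simp only [forbidZ, testBit_lor, testBit_shl, testBit_shr, Nat.testBit_mod_two_pow,
    Bool.or_eq_true, Bool.and_eq_true, decide_eq_true_eq] at hk
  obtain ⟨h₁, h₂, h₃⟩ | ⟨h₁, h₂⟩ := hk
  · refine .of_ne (by omega) fun _ _ hkc => ?_
    obtain ⟨h₄, h₅⟩ := (hP _ h₃).mem (k - h) (by omega) (by omega)
    exact hχ (k - h) k (2 * h) h₄ (by omega) (by omega) hh (by rw [hkc, h₅]) (by rw [hkc, hc])
  · refine .of_ne (by omega) fun hk₀ _ hkc => ?_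
    obtain ⟨-, h₄⟩ := (hP _ h₂).mem (h + k) (by omega) (by omega)
    exact hχ k (h + k) (2 * h) hk₀ (by omega) (by omega) hh (by rw [hkc, h₄]) (by rw [h₄, hc])

theorem Good.assignBasic (hχ : TripleFree χ) (hP : Good χ c P) (hi₀ : 0 < i) (hi : i ≤ 88)
    (hc : χ i = c) : Good χ c (assignBasic P i) := by
  refine hP.lor ((good_marks hi₀ hi hc).lor fun k hk => ?_)
  simp only [Nat.testBit_mod_two_pow, testBit_lor, Bool.or_eq_true, Bool.and_eq_true,
    decide_eq_true_eq] at hk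
  exact .of_ne hk.1 fun hk₀ hk' => hk.2.elim (forbidX_sound hχ hP hi₀ hc · hk')
    (forbidY_sound hχ hP hi hc · hk₀ hk')

theorem Good.assign (hχ : TripleFree χ) (hP : Good χ c P) (hi₀ : 0 < i) (hi : i ≤ 88)
    (hc : χ i = c) : Good χ c (assign P i) := by
  have hodd := hP.assignBasic hχ hi₀ hi hc
  unfold TwoTwo.assign
  cases hpar : Nat.beq (i % 2) 0
  · exact hodd
  · have h₂ : 2 * (i / 2) = i := by have := Nat.eq_of_beq_eq_true hpar; omega
    have hc' : χ (2 * (i / 2)) = c := by rw [h₂, hc]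
    exact hodd.lor ((good_marksEven (by omega) hc').lor (good_forbidZ hχ hP (by omega) hc'))

/-! ### Soundness of the search -/

theorem force_eq {α : Type} (n : ℕ) (k : ℕ → α) : force n k = k n := by
  cases n <;> rfl

theorem call_eq (f : ℕ → ℕ → ℕ → Bool) (a b c : ℕ) : call f a b c = f a b c := by
  simp only [call, call₂, call₃, force_eq]

theorem Good.bit_eq_false (hP : Good χ c P) (hi₀ : 0 < i) (hi : i ≤ 88) (hc : χ i = c) :
    bit P i = false := by
  by_contra hbit
  rw [Bool.not_eq_false] at hbit
  have hmod : (P >>> i) % 2 = 1 := Nat.eq_of_beq_eq_true hbit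
  refine (hP i ?_).forbidden hi₀ hi hc
  rw [← Nat.add_zero i, ← Nat.testBit_shiftRight, Nat.testBit_zero, hmod]
  rfl

/-- Soundness of the search. The number at which a node branches may be arbitrary: the branch of its
true colour contradicts the induction hypothesis. -/
theorem search_eq_false (hχ : TripleFree χ) (n : ℕ) :
    ∀ a b c, Good χ 0 a → Good χ 1 b → Good χ 2 c → search n a b c = false := by
  induction n with
  | zero => exact fun _ _ _ _ _ _ => rfl
  | succ n ih =>
    intro a b c ha hb hc
    change step (search n) a b c = false
    rw [step, force_eq, branch]
    generalize pick a b c = i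
    by_cases hi : 0 < i ∧ i ≤ 88
    · obtain ⟨hi₀, hi⟩ := hi
      simp only [call_eq, Bool.and_eq_false_iff, Bool.or_eq_false_iff]
      right
      obtain h | h | h : χ i = 0 ∨ χ i = 1 ∨ χ i = 2 := by generalize χ i = r; revert r; decide
      · exact .inl ⟨ha.bit_eq_false hi₀ hi h, ih _ _ _ (ha.assign hχ hi₀ hi h)
          (hb.ban hi (by simp [h])) (hc.ban hi (by simp [h]))⟩
      · exact .inr (.inl ⟨hb.bit_eq_false hi₀ hi h, ih _ _ _ (ha.ban hi (by simp [h]))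
          (hb.assign hχ hi₀ hi h) (hc.ban hi (by simp [h]))⟩)
      · exact .inr (.inr ⟨hc.bit_eq_false hi₀ hi h, ih _ _ _ (ha.ban hi (by simp [h]))
          (hb.ban hi (by simp [h])) (hc.assign hχ hi₀ hi h)⟩)
    · have : (Nat.ble 1 i && Nat.ble i 88) = false := by
        rw [Bool.eq_false_iff, Ne, Bool.and_eq_true, Nat.ble_eq, Nat.ble_eq]
        exact hi
      rw [this, Bool.false_and]

/-! ### The fourteen starting positions -/

/-- The word of the colour `c` at the start of a search for colourings that give `18`, `8`, `3`, `1`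
the colours `p`, `q`, `r`, `s`. It bans `c` at those of them that get another colour. With the three
words together only one colour is left for each of the four numbers, so the search starts with them. -/
def banned (p q r s : Fin 3) (c : Fin 3) : ℕ :=
  (bif p == c then 0 else 1 <<. 18) .|. (bif q == c then 0 else 1 <<. 8) .|.
  (bif r == c then 0 else 1 <<. 3) .|. (bif s == c then 0 else 1 <<. 1)

theorem good_banned (c : Fin 3) : Good χ c (banned (χ 18) (χ 8) (χ 3) (χ 1) c) := by
  have key : ∀ i ≤ 88, Good χ c (bif χ i == c then 0 else 1 <<. i) := by
    intro i hi
    by_cases h : χ i = c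
    · intro k hk
      simp [h] at hk
    · rw [beq_false_of_ne h]
      exact good_bitAt (.of_ne (by omega) fun _ _ => h)
  exact (((key 18 (by omega)).lor (key 8 (by omega))).lor (key 3 (by omega))).lor
    (key 1 (by omega))

/-- The colourings of `18`, `8`, `3`, `1` in which the colours are numbered by first appearance. -/
def starts : List (Fin 3 × Fin 3 × Fin 3 × Fin 3) :=
  [(0, 0, 0, 0), (0, 0, 0, 1), (0, 0, 1, 0), (0, 0, 1, 1), (0, 0, 1, 2), (0, 1, 0, 0), (0, 1, 0, 1),
   (0, 1, 0, 2), (0, 1, 1, 0), (0, 1, 1, 1), (0, 1, 1, 2), (0, 1, 2, 0), (0, 1, 2, 1), (0, 1, 2, 2)]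

theorem starts_cover :
    ∀ p q r s : Fin 3, ∃ σ : Equiv.Perm (Fin 3), (σ p, σ q, σ r, σ s) ∈ starts := by
  decide +kernel

/-- Whether the search refutes the given colours of `18`, `8`, `3`, `1`. Depth `90` suffices, since
each node gives a colour to a new number or has no children. -/
def run : Fin 3 × Fin 3 × Fin 3 × Fin 3 → Bool
  | (p, q, r, s) => search 90 (banned p q r s 0) (banned p q r s 1) (banned p q r s 2)

set_option maxHeartbeats 4000000 in
theorem run_eq_true : ∀ t ∈ starts, run t = true := by
  simp only [starts, List.forall_mem_cons]
  -- One kernel evaluation for each start keeps the memory for cached terms small.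
  refine ⟨?_, ?_, ?_, ?_, ?_, ?_, ?_, ?_, ?_, ?_, ?_, ?_, ?_, ?_, by simp⟩ <;> decide +kernel

end

end TwoTwo

/-- Every `3`-coloring of `{1, …, 88}` admits a monochromatic `(2,2)`-triple. -/
theorem n_2_2_3_le_88 (χ : ℕ → Fin 3) :
    ∃ x d : ℕ, 0 < x ∧ 0 < d ∧ 2 * x + d ≤ 88 ∧ 2 * x + 2 * d ≤ 88 ∧
      χ x = χ (2 * x + d) ∧ χ (2 * x + d) = χ (2 * x + 2 * d) := by
  by_contra hno
  obtain ⟨σ, hσ⟩ := TwoTwo.starts_cover (χ 18) (χ 8) (χ 3) (χ 1)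
  have hfree : TwoTwo.TripleFree (σ ∘ χ) := by
    intro x y z hx hxy hz hz' h₁ h₂
    obtain ⟨d, rfl⟩ := Nat.exists_eq_add_of_lt hxy
    obtain rfl : z = 2 * x + 2 * (d + 1) := by omega
    exact hno ⟨x, d + 1, hx, by omega, by omega, hz', σ.injective h₁, σ.injective h₂⟩
  have hrun := TwoTwo.run_eq_true _ hσ
  exact absurd hrun (Bool.not_eq_true _ ▸
    TwoTwo.search_eq_false hfree 90 _ _ _ (TwoTwo.good_banned 0)
      (TwoTwo.good_banned 1) (TwoTwo.good_banned 2))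
end

section
/- There exists a $3$-coloring of the integer interval $\{1, 2, \ldots, 87\}$ with no monochromatic $(2,2)$-triple; together with the fact that every $3$-coloring of $\{1,\ldots,88\}$ contains one, this shows $n(2,2;3) = 88$. -/
/-!
The entries `x < y < z` of a triple satisfy `y = x + z / 2`, where `z = 2x + 2d` is even, so `x < z / 2`
and `x ≡ y (mod 2)` when `4 ∣ z`. This suggests a coloring given by intervals on each of the classes
odd, `2 mod 4` and `0 mod 4`:

* color `0`: the odd numbers up to `9` or from `41` on, and the multiples of `4` in `[28, 60]`;
* color `1`: the odd numbers in `[11, 39]`, the numbers `2, 4, 6, 10, 20`, and the multiples of `4`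
  from `64` on;
* color `2`: the numbers `≡ 2 (mod 4)` from `14` on, and `8, 12, 16, 24`.

For instance, in color `0` the largest entry `z` is a multiple of `4` in `[28, 60]`; if `x` is odd,
then `x ≤ 9` and `y` is an odd number in `[15, 39]`, while if `x` is even, the triple is
`(28, 58, 60)`; in neither case does `y` have color `0`. In color `2` all entries are even,
so `4 ∣ z`, whence `z ≤ 24`; as `8 ≤ x < z / 2`, this leaves only `(8, 20, 24)`, but `20` has
color `1`. Color `1` is similar, and the verification is a finite computation.
-/

/-- The coloring, extended to all of `ℕ`; only its values on `{1, …, 87}` matter. -/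
def intervalColoring (n : ℕ) : Fin 3 :=
  if n % 2 = 1 then (if 11 ≤ n ∧ n ≤ 39 then 1 else 0)
  else if n % 4 = 2 then (if n ≤ 10 then 1 else 2)
  else if n = 4 ∨ n = 20 ∨ 64 ≤ n then 1
  else if n ≤ 24 then 2 else 0

/-- There is a `3`-coloring of `{1, …, 87}` with no monochromatic `(2,2)`-triple
(so, with the previous result, `n(2,2;3) = 88`). -/
theorem n_2_2_3_gt_87 :
    ∃ χ : ℕ → Fin 3, ∀ x d : ℕ, 0 < x → 0 < d → 2 * x + 2 * d ≤ 87 →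
      ¬(χ x = χ (2 * x + d) ∧ χ (2 * x + d) = χ (2 * x + 2 * d)) := by
  have key : ∀ x < 44, ∀ d < 44, 0 < x ∧ 0 < d ∧ 2 * x + 2 * d ≤ 87 →
      ¬(intervalColoring x = intervalColoring (2 * x + d) ∧
        intervalColoring (2 * x + d) = intervalColoring (2 * x + 2 * d)) := by
    decide +kernel
  exact ⟨intervalColoring, fun x d hx hd h => key x (by lia) d (by lia) ⟨hx, hd, h⟩⟩
end

section
/- Every $3$-coloring of the positive integers admits a monochromatic $(2,2)$-triple; equivalently, $\mathrm{dor}(2,2) \ge 3$. -/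
/-!
Write `w = x + d`; a `(2,2)`-triple is then `(x, x + w, 2w)` with `0 < x < w`. This family is
invariant under dilation, so if `χ` has no monochromatic triple, neither has `n ↦ χ (k * n)` for
any `k > 0`. Hence a finite refutation of `χ (k * p) = χ (k * q)`, valid for every triple-free
`χ`, applies to all dilates of `χ` at once: the triple-free colouring `ψ n = χ (k * n)` satisfies
`ψ (m * p) ≠ ψ (m * q)` for all `m > 0`. From then on the ratio `p : q` is a forbidden
monochromatic pair, which makes later refutations much shorter (`Avoids.dilate`).

The ratios `1 : 12`, `1 : 6`, `1 : 3`, `2 : 3`, `3 : 4` are forbidden in this order, after which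
a short case analysis starting from the colour of `3` shows that no colouring is left. Each case
analysis is a decision tree on the colours of integers at most `128`. A tree is recorded as the
list of integers it branches on, in preorder; `refute` replays it, closing a branch as soon as a
forbidden triple or pair appears and using the symmetry between two colours not yet in use.
`refute_sound` shows that a successful replay is a proof, and the kernel evaluates `refute`.
-/

namespace DorTwoTwo

/-! ### Triple-free colourings and dilation -/

/-- `χ` has no monochromatic `(2,2)`-triple, written as `(x, x + w, 2 * w)` with `0 < x < w`, and
no monochromatic pair `(k * p, k * q)` with `k > 0` and `(p, q) ∈ L`. -/
def Avoids (L : List (ℕ × ℕ)) (χ : ℕ → Fin 3) : Prop :=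
  (∀ x w, 0 < x → x < w → ¬ (χ x = χ (x + w) ∧ χ (x + w) = χ (2 * w))) ∧
    ∀ p ∈ L, ∀ k, 0 < k → χ (k * p.1) ≠ χ (k * p.2)

theorem Avoids.perm {L : List (ℕ × ℕ)} {χ : ℕ → Fin 3} (h : Avoids L χ)
    (σ : Equiv.Perm (Fin 3)) : Avoids L (fun n => σ (χ n)) := by
  simpa [Avoids] using h

theorem Avoids.comp_mul {L : List (ℕ × ℕ)} {χ : ℕ → Fin 3} (h : Avoids L χ) {k : ℕ}
    (hk : 0 < k) : Avoids L (fun n => χ (k * n)) := by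
  refine ⟨fun x w hx hw => ?_, fun p hp m hm => ?_⟩
  · have := h.1 (k * x) (k * w) (by positivity) (by gcongr)
    rwa [← mul_add, mul_left_comm] at this
  · simpa only [mul_assoc] using h.2 p hp (k * m) (by positivity)

/-- If no `L`-avoiding colouring gives `k * p` and `k * q` the same colour, then dilating an
`L`-avoiding colouring by `k` makes it avoid the ratio `p : q` altogether. -/
theorem Avoids.dilate {L : List (ℕ × ℕ)} {k p q : ℕ} (hk : 0 < k)
    (H : ∀ χ, Avoids L χ → χ (k * p) ≠ χ (k * q)) {χ : ℕ → Fin 3} (h : Avoids L χ) :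
    Avoids ((p, q) :: L) (fun n => χ (k * n)) := by
  refine ⟨(h.comp_mul hk).1, fun r hr m hm => ?_⟩
  rcases List.mem_cons.1 hr with rfl | hr
  · simpa only [mul_left_comm] using H _ (h.comp_mul hm)
  · exact (h.comp_mul hk).2 r hr m hm

/-! ### Replaying decision trees -/

/-- A set `A` of integers in `[1, 128]`, as three bit masks that turn the search for triples into
shifts: `m` has the bits `n ∈ A`, `h` the bits `w` with `2 * w ∈ A`, and `r` the bits `128 - n`
for `n ∈ A`. -/
structure ColourClass where
  m : ℕ
  h : ℕ
  r : ℕ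

namespace ColourClass

/-- The empty set. -/
def empty : ColourClass := ⟨0, 0, 0⟩

/-- Insertion of `n`. -/
def add (s : ColourClass) (n : ℕ) : ColourClass :=
  ⟨s.m ||| 2 ^ n, bif Nat.beq (n % 2) 0 then s.h ||| 2 ^ (n / 2) else s.h, s.r ||| 2 ^ (128 - n)⟩

/-- Whether all three masks vanish. -/
def isEmpty (s : ColourClass) : Bool := Nat.beq (s.m ||| s.h ||| s.r) 0

/-- Whether `n` together with members of `s` forms a triple `(x, x + w, 2 * w)`; the three
disjuncts correspond to `n = 2 * w`, `n = x` and `n = x + w`. -/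
def hasTriple (s : ColourClass) (n : ℕ) : Bool :=
  (Nat.beq (n % 2) 0 && !Nat.beq (s.m &&& (s.m >>> (n / 2)) &&& (2 ^ (n / 2) - 1)) 0) ||
  !Nat.beq (((s.m >>> n) &&& s.h) >>> (n + 1)) 0 ||
  !Nat.beq (((s.r >>> (128 - n)) &&& s.h) >>> (n / 2 + 1)) 0

/-- Whether `n` together with a member of `s` forms a pair `(k * p, k * q)` with
`(p, q) ∈ L`. -/
def hasPair (L : List (ℕ × ℕ)) (s : ColourClass) (n : ℕ) : Bool :=
  L.any fun p => (Nat.beq (n % p.1) 0 && s.m.testBit (n / p.1 * p.2)) ||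
    (Nat.beq (n % p.2) 0 && s.m.testBit (n / p.2 * p.1))

/-- Every integer recorded in one of the masks of `s` is positive and has colour `c`. -/
structure Holds (χ : ℕ → Fin 3) (c : Fin 3) (s : ColourClass) : Prop where
  m : ∀ i, s.m.testBit i → 0 < i ∧ χ i = c
  h : ∀ i, s.h.testBit i → χ (2 * i) = c
  r : ∀ i, s.r.testBit i → i < 128 ∧ χ (128 - i) = c

theorem holds_of_isEmpty {s : ColourClass} (hs : s.isEmpty) (χ : ℕ → Fin 3) (c : Fin 3) :
    Holds χ c s := by
  obtain ⟨m, h, r⟩ := s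
  simp only [isEmpty, Nat.beq_eq, Nat.or_eq_zero_iff] at hs
  obtain ⟨⟨rfl, rfl⟩, rfl⟩ := hs
  constructor <;> simp

theorem holds_empty (χ : ℕ → Fin 3) (c : Fin 3) : Holds χ c empty :=
  holds_of_isEmpty rfl χ c

theorem Holds.add {χ : ℕ → Fin 3} {c : Fin 3} {s : ColourClass} (hs : Holds χ c s) {n : ℕ}
    (h0 : 0 < n) (hB : n ≤ 128) (hn : χ n = c) : Holds χ c (s.add n) := by
  refine ⟨fun i hi => ?_, fun i hi => ?_, fun i hi => ?_⟩
  · simp only [ColourClass.add, Nat.testBit_or, Nat.testBit_two_pow, Bool.or_eq_true,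
      decide_eq_true_eq] at hi
    rcases hi with hi | rfl
    exacts [hs.m i hi, ⟨h0, hn⟩]
  · simp only [ColourClass.add] at hi
    cases hb : Nat.beq (n % 2) 0 with
    | false => exact hs.h i (by simpa [hb] using hi)
    | true =>
      simp only [hb, cond_true, Nat.testBit_or, Nat.testBit_two_pow, Bool.or_eq_true,
        decide_eq_true_eq] at hi
      rcases hi with hi | rfl
      · exact hs.h i hi
      · rwa [Nat.mul_div_cancel' (Nat.dvd_of_mod_eq_zero (Nat.eq_of_beq_eq_true hb))]
  · simp only [ColourClass.add, Nat.testBit_or, Nat.testBit_two_pow, Bool.or_eq_true,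
      decide_eq_true_eq] at hi
    rcases hi with hi | rfl
    · exact hs.r i hi
    · exact ⟨by omega, by rwa [Nat.sub_sub_self hB]⟩

theorem exists_testBit_of_not_beq {a : ℕ} (h : (!Nat.beq a 0) = true) :
    ∃ i, a.testBit i = true := by
  apply Nat.exists_testBit_of_ne_zero
  rintro rfl
  simp at h

theorem Holds.not_hasTriple {L : List (ℕ × ℕ)} {χ : ℕ → Fin 3} (hχ : Avoids L χ) {c : Fin 3}
    {s : ColourClass} (hs : Holds χ c s) {n : ℕ} (h0 : 0 < n) (hB : n ≤ 128) (hn : χ n = c) :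
    ¬ s.hasTriple n := by
  intro H
  simp only [hasTriple, Bool.or_eq_true, Bool.and_eq_true] at H
  rcases H with (⟨he, H⟩ | H) | H
  · obtain ⟨x, hx⟩ := exists_testBit_of_not_beq H
    simp only [Nat.testBit_land, Nat.testBit_shiftRight, Nat.testBit_two_pow_sub_one,
      Bool.and_eq_true, decide_eq_true_eq] at hx
    obtain ⟨⟨hx, hy⟩, hlt⟩ := hx
    have h2 : 2 * (n / 2) = n :=
      Nat.mul_div_cancel' (Nat.dvd_of_mod_eq_zero (Nat.eq_of_beq_eq_true he))
    refine hχ.1 x (n / 2) (hs.m x hx).1 hlt ⟨?_, ?_⟩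
    · rw [(hs.m x hx).2, add_comm, (hs.m _ hy).2]
    · rw [h2, hn, add_comm, (hs.m _ hy).2]
  · obtain ⟨j, hj⟩ := exists_testBit_of_not_beq H
    simp only [Nat.testBit_land, Nat.testBit_shiftRight, Bool.and_eq_true] at hj
    refine hχ.1 n (n + 1 + j) h0 (by omega) ⟨?_, ?_⟩
    · rw [hn, (hs.m _ hj.1).2]
    · rw [(hs.m _ hj.1).2, hs.h _ hj.2]
  · obtain ⟨j, hj⟩ := exists_testBit_of_not_beq H
    simp only [Nat.testBit_land, Nat.testBit_shiftRight, Bool.and_eq_true] at hj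
    obtain ⟨hr, hw⟩ := hj
    obtain ⟨hlt, hx⟩ := hs.r _ hr
    -- Bit `128 - n + w` of the reversed mask stands for `x = n - w`.
    have hy : 128 - (128 - n + (n / 2 + 1 + j)) + (n / 2 + 1 + j) = n := by omega
    refine hχ.1 (128 - (128 - n + (n / 2 + 1 + j))) (n / 2 + 1 + j) (by omega) (by omega) ⟨?_, ?_⟩
    · rw [hy, hx, hn]
    · rw [hy, hn, hs.h _ hw]

theorem Holds.not_hasPair {L : List (ℕ × ℕ)} {χ : ℕ → Fin 3} (hχ : Avoids L χ) {c : Fin 3}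
    {s : ColourClass} (hs : Holds χ c s) {n : ℕ} (h0 : 0 < n) (hn : χ n = c) :
    ¬ s.hasPair L n := by
  intro H
  simp only [hasPair, List.any_eq_true, Bool.or_eq_true, Bool.and_eq_true] at H
  obtain ⟨p, hp, ⟨hd, hb⟩ | ⟨hd, hb⟩⟩ := H
  · have h2 : n / p.1 * p.1 = n :=
      Nat.div_mul_cancel (Nat.dvd_of_mod_eq_zero (Nat.eq_of_beq_eq_true hd))
    have hk : 0 < n / p.1 := Nat.pos_of_ne_zero fun h => by simp [h] at h2; omega
    exact hχ.2 p hp _ hk (by rw [h2, hn, (hs.m _ hb).2])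
  · have h2 : n / p.2 * p.2 = n :=
      Nat.div_mul_cancel (Nat.dvd_of_mod_eq_zero (Nat.eq_of_beq_eq_true hd))
    have hk : 0 < n / p.2 := Nat.pos_of_ne_zero fun h => by simp [h] at h2; omega
    exact hχ.2 p hp _ hk (by rw [h2, hn, (hs.m _ hb).2])

end ColourClass

open ColourClass

/-- Replays a decision tree, given as the preorder list `l` of the integers it branches on, from
the partial colouring with colour classes `a`, `b`, `c`. A branch in which the new integer
completes a forbidden triple or pair is closed without consuming any of `l`, and so is the branch
of the third colour while the last two colours are both unused. The result is the rest of `l`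
after the tree, or `none` if the tree is not a refutation. The first argument is fuel, bounding
the depth. -/
def refute (L : List (ℕ × ℕ)) :
    ℕ → ColourClass → ColourClass → ColourClass → List ℕ → Option (List ℕ)
  | 0, _, _, _, _ => none
  | _ + 1, _, _, _, [] => none
  | f + 1, a, b, c, n :: l =>
    bif Nat.ble 1 n && Nat.ble n 128 then
      (bif a.hasTriple n || a.hasPair L n then some l else refute L f (a.add n) b c l).bind
      fun l =>
      (bif b.hasTriple n || b.hasPair L n then some l else refute L f a (b.add n) c l).bind
      fun l =>
      bif b.isEmpty && c.isEmpty then some l else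
      bif c.hasTriple n || c.hasPair L n then some l else refute L f a b (c.add n) l
    else none

theorem refute_sound {L : List (ℕ × ℕ)} (f : ℕ) : ∀ {a b c : ColourClass} {l l' : List ℕ},
    refute L f a b c l = some l' → ∀ {χ : ℕ → Fin 3}, Avoids L χ →
      Holds χ 0 a → Holds χ 1 b → Holds χ 2 c → False := by
  induction f with
  | zero => intro a b c l l' h; simp [refute] at h
  | succ f ih =>
    intro a b c l l' h
    cases l with
    | nil => simp [refute] at h
    | cons n l =>
      rw [refute] at h
      cases hn : (Nat.ble 1 n && Nat.ble n 128) with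
      | false => simp [hn] at h
      | true =>
      rw [hn, cond_true] at h
      simp only [Bool.and_eq_true, Nat.ble_eq] at hn
      obtain ⟨h0, hB⟩ := hn
      have closed : ∀ {χ : ℕ → Fin 3}, Avoids L χ → ∀ {i : Fin 3} {s : ColourClass},
          Holds χ i s → χ n = i → (s.hasTriple n || s.hasPair L n) = false := by
        intro χ hχ i s hs hi
        rw [Bool.or_eq_false_iff, ← Bool.not_eq_true, ← Bool.not_eq_true]
        exact ⟨hs.not_hasTriple hχ h0 hB hi, hs.not_hasPair hχ h0 hi⟩
      obtain ⟨l₁, h1, h⟩ := Option.bind_eq_some_iff.1 h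
      obtain ⟨l₂, h2, h⟩ := Option.bind_eq_some_iff.1 h
      have case1 : ∀ {χ : ℕ → Fin 3}, Avoids L χ → Holds χ 0 a → Holds χ 1 b → Holds χ 2 c →
          χ n = 1 → False := by
        intro χ hχ ha hb hc hi
        rw [closed hχ hb hi, cond_false] at h2
        exact ih h2 hχ ha (hb.add h0 hB hi) hc
      intro χ hχ ha hb hc
      have : χ n = 0 ∨ χ n = 1 ∨ χ n = 2 := by
        generalize χ n = i
        revert i
        decide
      rcases this with hi | hi | hi
      · rw [closed hχ ha hi, cond_false] at h1
        exact ih h1 hχ (ha.add h0 hB hi) hb hc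
      · exact case1 hχ ha hb hc hi
      · cases hbc : (b.isEmpty && c.isEmpty) with
        | true =>
          simp only [Bool.and_eq_true] at hbc
          -- The last two colours are unused, so swapping them reduces to the previous case.
          have key : ∀ i : Fin 3, i = 0 → Equiv.swap (1 : Fin 3) 2 i = 0 := by decide
          refine case1 (hχ.perm (Equiv.swap 1 2)) ⟨fun i h => ?_, fun i h => ?_, fun i h => ?_⟩
            (holds_of_isEmpty hbc.1 _ _) (holds_of_isEmpty hbc.2 _ _) ?_
          · exact ⟨(ha.m i h).1, key _ (ha.m i h).2⟩
          · exact key _ (ha.h i h)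
          · exact ⟨(ha.r i h).1, key _ (ha.r i h).2⟩
          · rw [hi, Equiv.swap_apply_right]
        | false =>
          rw [hbc, cond_false, closed hχ hc hi, cond_false] at h
          exact ih h hχ ha hb (hc.add h0 hB hi)

/-- A tree refuting that `u` and `v` both have colour `0` shows that their colours differ, since
the colours may be permuted. -/
theorem ne_of_refute {L : List (ℕ × ℕ)} {u v : ℕ} (f : ℕ) (l : List ℕ)
    (h : (Nat.ble 1 u && Nat.ble u 128 && Nat.ble 1 v && Nat.ble v 128 &&
      (refute L f ((empty.add u).add v) empty empty l).isSome) = true)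
    (χ : ℕ → Fin 3) (hχ : Avoids L χ) : χ u ≠ χ v := by
  intro huv
  simp only [Bool.and_eq_true, Nat.ble_eq] at h
  obtain ⟨⟨⟨⟨hu, hu'⟩, hv⟩, hv'⟩, h⟩ := h
  obtain ⟨l', hl⟩ := Option.isSome_iff_exists.1 h
  exact refute_sound f hl (hχ.perm (Equiv.swap (χ u) 0))
    (((holds_empty _ _).add hu hu' (Equiv.swap_apply_left _ _)).add hv hv'
      (by rw [← huv]; exact Equiv.swap_apply_left _ _))
    (holds_empty _ _) (holds_empty _ _)

/-! ### The decision trees, one for each forbidden ratio and one for the final contradiction -/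

set_option maxRecDepth 100000 in
theorem ne_ratio_1_12 (χ : ℕ → Fin 3) (h : Avoids [] χ) :
    χ (2 * 1) ≠ χ (2 * 12) :=
  ne_of_refute 40 (
    [44, 14, 60, 72, 116, 8, 20, 104, 4, 68, 36, 88, 58, 6, 16, 34, 40, 54, 112, 12, 16, 70, 76,
    43, 46, 16, 6, 38, 112, 40, 12, 34, 64, 56, 56, 36, 64, 46, 88, 6, 68, 36, 42, 88, 58, 13,
    76, 94, 41, 7, 78, 43, 46, 104, 58, 13, 76, 94, 30, 100, 32, 1, 10, 26, 38, 22, 62, 3, 7,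
    32, 4, 16, 40, 36, 48, 12, 34, 64, 92, 52, 96, 38, 1, 13, 54, 96, 50, 16, 10, 28, 32, 12,
    4, 52, 28, 50, 88, 16, 28, 64, 88, 40, 50, 96, 68, 4, 32, 32, 10, 16, 28, 38, 12, 36, 68,
    66, 17, 50, 84, 30, 5, 27, 47, 12, 78, 108, 56, 36, 96, 68, 42, 54, 35, 68, 36, 26, 92, 1,
    13, 31, 34, 9, 42, 70, 9, 106, 39, 62, 32, 48, 92, 26, 10, 84, 22, 112, 28, 42, 16, 10, 3,
    32, 46, 37, 9, 4, 31, 1, 112, 10, 3, 32, 58, 84, 12, 74, 5, 50, 74, 13, 39, 5, 12, 54, 18,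
    64, 50, 80, 84, 48, 6, 56, 31, 34, 56, 46, 76, 6, 52, 22, 32, 88, 84, 50, 26, 20, 80, 48,
    22, 38, 68, 7, 21, 55, 96, 36, 96, 6, 22, 100, 16, 20, 80, 74, 4, 26, 6, 96, 16, 28, 49,
    76, 22, 35, 74, 5, 42, 50, 100, 13, 112, 71, 58, 15, 18, 112, 61, 100, 11, 4, 48, 41, 32,
    10, 112, 16, 100, 13, 22, 42, 58, 68, 36, 88, 26, 28, 62, 20, 36, 50, 11, 26, 1, 80, 41,
    98, 59, 5, 108, 48, 92, 54, 18, 17, 30, 41, 47, 3, 42, 68, 36, 58, 15, 34, 102, 10, 68,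
    32, 80, 42, 68, 36, 56, 30, 88, 64, 112, 68, 36, 26, 54, 56, 18, 30, 11, 88, 1, 58, 10,
    76, 52, 47, 92, 1, 70, 9, 88, 30, 32, 48, 18, 54, 47, 92, 90, 54, 18, 11, 28, 10, 32, 4,
    48, 1, 15, 31, 6, 16, 64, 6, 1, 64, 10, 80, 46, 6, 80, 42, 32, 10, 6, 36, 54, 5, 41, 62,
    1, 8, 70, 108, 19, 18, 49, 40, 13, 16, 43, 7, 18, 40, 16, 7, 1, 8, 9, 34, 26, 28, 4, 12,
    16, 22, 28, 52, 100, 36, 64, 40, 34, 64, 42, 56, 34, 20, 40, 12, 100, 22, 54, 4, 12, 84,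
    46, 18, 7, 52, 30, 16, 56, 56, 30, 26, 11, 40, 18, 28, 116, 56, 30, 38, 16, 48, 52, 20,
    40, 18, 26, 7, 42, 16, 12, 4, 112, 54, 76, 84, 52, 100, 42, 12, 40, 34, 48, 4, 16, 46, 6,
    36, 1, 8, 26, 3, 56, 19, 16, 22, 40, 52, 18, 5, 52, 8, 28, 20, 22, 30, 4, 16, 52, 28, 22,
    88, 100, 50, 56, 1, 20, 8, 36, 26, 52, 3, 56, 42, 16, 19, 40, 22, 42, 23, 26, 48, 30, 12,
    17, 34, 22, 4, 40, 16, 56, 30, 26, 23, 11, 42, 9, 21, 30, 102, 116, 68, 36, 88, 58, 39,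
    50, 52, 6, 40, 66, 57, 6, 108, 64, 18, 5, 41, 56, 30, 64, 108, 68, 36, 52, 54, 40, 25, 4,
    6, 62, 116, 4, 16, 112, 52, 30, 100, 40, 22, 34, 50, 40, 36, 20, 6, 37, 20, 36, 54, 8, 80,
    92, 76, 48, 30, 12, 40, 4, 16, 38, 21, 70, 49, 112, 94, 66, 23, 68, 90, 116, 52, 112, 30,
    70, 40, 34, 54, 80, 20, 42, 68, 36, 64, 88, 28, 112, 6, 116, 8, 100, 52, 4, 28, 6, 1, 17,
    22, 8, 5, 26, 48, 112, 18, 16, 82, 7, 56, 6, 36, 26, 4, 1, 104, 17, 78, 40, 34, 18, 8, 30,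
    92, 5, 10, 12, 18, 88, 108, 64, 16, 52, 112, 108, 70, 18, 104, 76, 58, 16, 52, 42, 42, 41,
    11, 4, 16, 112, 116, 74, 78, 90, 100, 15, 35, 52, 40, 5, 52, 4, 16, 6, 56, 22, 34, 31, 33,
    3, 112, 100, 22, 6, 17, 28, 76, 3, 110, 78, 43, 62, 98, 13, 96, 56, 40, 68, 36, 80, 20,
    56, 42, 104, 11, 6, 26, 76, 100, 31, 56, 100, 6, 94, 22, 42, 50, 3, 18, 4, 40, 13, 6, 35,
    26, 1, 8, 34, 76, 42, 56, 28, 78, 12, 21, 8, 11, 26, 80, 30, 42, 56, 40, 76, 70, 17, 26,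
    1, 34, 31, 6, 16, 13, 28, 38, 25, 64, 78, 80, 18, 68, 36, 28, 80, 4, 64, 100, 6, 52, 12,
    42, 46, 26, 20, 19, 7, 40, 48, 22, 12, 88, 58, 3, 10, 22, 48, 12, 8, 42, 6, 1, 10, 31, 34,
    28, 16, 40, 76, 36, 20, 16, 4, 34, 40, 10, 68, 6, 28, 48, 26, 12, 64, 58, 46, 31, 1, 6,
    108, 56, 12, 48, 30, 8, 32, 38, 18, 5, 52, 29, 31, 34, 34, 64, 38, 5, 50, 116, 78, 102,
    17, 48, 7, 9, 39, 19, 74, 37, 19, 68, 72, 90, 39, 42, 92, 74, 18, 7, 3, 52, 8, 88, 90, 92,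
    4, 22, 58, 21, 10, 28, 7, 26, 32, 42, 96, 68, 4, 40, 34, 88, 38, 104, 92, 88, 50, 58, 72,
    112, 48, 100, 68, 38, 1, 70, 74, 50, 26, 98, 19, 21, 41, 46, 80, 19, 72, 56, 42, 23, 82,
    54, 64, 28, 13, 5, 42, 23, 3, 15, 37, 58, 30, 7, 8, 21, 46, 80, 82, 26, 28, 48, 9, 19, 26,
    11, 8, 48, 74, 98, 42, 30, 23, 56, 51, 100, 4, 40, 10, 52, 56, 18, 29, 32, 7, 12, 64, 30,
    52, 32, 18, 4, 40, 64, 8, 12, 56, 52, 34, 64, 4, 34, 12, 48, 40, 6, 56, 76, 32, 22, 30,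
    32, 8, 46, 88, 48, 4, 28, 88, 6, 58, 108, 68, 40, 96, 52, 72, 26, 12, 92, 96, 84, 68, 40,
    12, 34, 3, 42, 10, 68, 26, 25, 28, 46, 52, 10, 42, 13, 18, 26, 1, 28, 46, 25, 11, 70, 50,
    68, 16, 10, 40, 34, 52, 6, 27, 48, 4, 108, 46, 22, 56, 6, 108, 56, 104, 48, 26, 4, 28, 58,
    12, 88, 6, 10, 28, 80, 46, 13, 88, 27, 58, 5, 106, 30, 82, 29, 54, 40, 76, 48, 22, 92, 56,
    30, 108, 64, 96, 76, 62, 80, 104, 54, 29, 51, 16, 74, 11, 6, 23, 102, 40, 1, 3, 25, 9, 26,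
    12, 6, 52, 28, 92, 16, 54, 64, 104, 56, 80, 4, 54, 104, 8, 26, 92, 6, 16, 40, 52, 40, 4,
    16, 56, 30, 72, 56, 18, 5, 66, 38, 27, 80, 6, 112, 40, 22, 16, 49, 64, 17, 38, 16, 40, 34,
    4, 80, 6, 28, 68, 11, 26, 28, 56, 3, 42, 11, 15, 32, 18, 10, 68, 80, 6, 28, 76, 88, 72,
    32, 6, 68, 72, 38, 96, 64, 4, 80, 56, 108, 104, 54, 76, 80, 30, 42, 32, 96, 6, 88, 46, 80,
    6, 5, 18, 48, 84, 8, 30, 12, 72, 10, 1, 16, 34, 22, 76, 3, 27, 9, 90, 54, 92, 51, 26, 21,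
    1, 46, 25, 28, 4, 3, 50, 52, 64, 9, 35, 26, 56, 20, 30, 12, 1, 4, 22, 34, 34, 3, 31, 20,
    12, 40, 68, 26, 42, 4, 3, 22, 16, 34, 3, 7, 8, 56, 42, 84, 27, 66, 16, 38, 56, 64, 30, 8,
    8, 80, 40, 68, 26, 42, 4, 12, 32, 64, 52, 28, 38, 78, 84, 1, 21, 50, 10, 46, 52, 8, 20,
    12, 34, 23, 64, 28, 56, 16, 22, 40, 26, 9, 40, 16, 4, 1, 32, 17, 3, 39, 54, 66, 70, 31,
    16, 4, 1, 18, 38, 64, 28, 22, 32, 17, 17, 7, 22, 26, 19, 28, 9, 30, 48, 17, 18, 62, 84,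
    56, 33, 11, 102, 38, 1, 11, 32, 4, 16, 64, 18, 48, 26, 30, 84, 50, 62, 23, 1, 4, 10, 13,
    19, 25, 3, 9, 12, 10, 31, 34, 30, 38, 72, 56, 46, 1, 15, 80, 37, 48, 62, 25, 18, 48, 84,
    80, 16, 10, 35, 50, 13, 48, 56, 18, 17, 62, 37, 76, 40, 10, 7, 10, 46, 33, 40, 13, 1, 17,
    18, 48, 62, 32, 37, 13, 4, 1, 26, 23, 38, 16, 48, 34, 18, 26, 11, 20, 12, 16, 34, 40, 3,
    23, 18, 80, 40, 28, 64, 12, 46, 1, 26, 23, 34, 18, 40, 48, 25, 64, 38, 56, 18, 48, 84, 1,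
    13, 62, 76, 112, 20, 16, 38, 18, 52, 56, 26, 23, 34, 18, 40, 48, 10, 10, 16, 28, 64, 34,
    40, 56, 8, 80, 30, 46, 1, 46, 88, 58, 40, 76, 22, 96, 17, 54, 66, 3, 104, 84, 32, 68, 96,
    50, 12, 76, 1, 13, 46, 64, 33, 80, 3, 76, 15, 40, 35, 34, 17, 30, 28, 16, 52, 40, 21, 4,
    76, 3, 78, 43, 80, 72, 88, 96, 54, 40, 76, 34, 19, 9, 26, 50, 70, 4, 16, 40, 30, 39, 13,
    52, 3, 64, 20, 38, 16, 28, 64, 38, 15, 58, 68, 26, 3, 12, 50, 37, 31, 16, 28, 58, 15, 3,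
    32, 4, 12, 26, 33, 20, 7, 62, 38, 40, 4, 9, 11, 30, 29, 3, 12, 56, 32, 16, 4, 28, 11, 3,
    26, 20, 12, 28, 16, 52, 40, 76, 22, 48, 92, 3, 17, 74, 15, 7, 42, 35, 56, 8, 26, 21, 4, 1,
    6, 5, 78, 8, 40, 1, 26, 18, 36, 4, 22, 19, 34, 18, 46, 1, 25, 30, 48, 29, 80, 56, 41, 36,
    102, 19, 70, 29, 7, 48, 36, 26, 56, 64, 17, 100, 94, 108, 31, 72, 34, 96, 52, 42, 20, 36,
    54, 33, 96, 15, 38, 62, 21, 25, 72, 102, 7, 3, 32, 92, 60, 64, 82, 38, 33, 17, 37, 1, 30,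
    58, 45, 72, 80, 33, 32, 64, 1, 4, 76, 62, 108, 72, 42, 68, 30, 29, 25, 64, 30, 92, 96, 41,
    64, 56, 36, 13, 1, 102, 34, 52, 52, 16, 72, 4, 50, 92, 26, 19, 104, 42, 55, 65, 3, 13, 20,
    13, 56, 41, 50, 38, 72, 36, 56, 50, 84, 48, 12, 80, 72, 42, 15, 26, 74, 3, 96, 51, 34, 18,
    88, 10, 1, 27, 45, 7, 19, 36, 63, 23, 56, 58, 3, 110, 36, 84, 32, 104, 60, 96, 48, 80, 1,
    30, 58, 96, 23, 4, 56, 66, 13, 46, 1, 18, 40, 52, 27, 28, 4, 46, 54, 46, 28, 4, 40, 17,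
    22, 15, 36, 33, 10, 41, 56, 64, 37, 72, 10, 108, 33, 13, 40, 10, 4, 60, 104, 17, 32, 30,
    36, 20, 12, 28, 13, 46, 4, 9, 48, 41, 45, 72, 80, 64, 37, 13, 46, 10, 40, 17, 32, 30, 40,
    46, 17, 22, 62, 23, 64, 30, 52, 50, 20, 33, 45, 18, 56, 80, 16, 10, 18, 20, 16, 56, 33,
    34, 38, 50, 12, 27, 31, 11, 4, 32, 40, 17, 25, 7, 26, 36, 76, 80, 34, 58, 76, 18, 68, 33,
    37, 20, 12, 72, 42, 26, 10, 28, 46, 28, 26, 40, 18, 4, 17, 32, 18, 42, 50, 4, 17, 32, 59,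
    116, 30, 38, 11, 48, 52, 80, 4, 18, 50, 52, 11, 49, 76, 55, 112, 100, 108, 58, 27, 68, 74,
    10, 7, 39, 30, 61, 76, 106, 17, 77, 18, 21, 52, 47, 37, 52, 18, 72, 26, 42, 4, 50, 56, 29,
    36, 32, 34, 23, 56, 50, 27, 9, 31, 13, 29, 30, 38, 11, 19, 22, 33, 16, 72, 41, 22, 3, 19,
    58, 28, 41, 12, 52, 31, 18, 94, 20, 16, 116, 22, 4, 15, 38, 42, 21, 25, 3, 45, 108, 54,
    96, 104, 60, 15, 46, 80, 88, 36, 59, 18, 70, 10, 49, 94, 49, 53, 18, 22, 10, 18, 17, 88,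
    20, 28, 59, 30, 68, 23, 42, 41, 23, 80, 18, 34, 46, 40, 19, 64, 39, 7, 72, 88, 59, 96, 98,
    102, 42, 63, 29, 68, 36, 62, 1, 52, 27, 102, 56, 55, 100, 4, 28, 46, 10, 18, 46, 13, 4,
    30, 21, 64, 22, 42, 80, 16, 58, 7, 28, 32, 96, 20, 54, 49, 68, 15, 33, 37, 56, 64, 76, 13,
    46, 37, 64, 80, 38, 32, 30, 20, 12, 8, 58, 53, 27, 104, 64, 38, 26, 18, 17, 20, 7, 16, 33,
    37, 76, 26, 15, 19, 72, 60, 54, 28, 22, 80, 35, 22, 40, 17, 18, 112, 100, 12, 74, 68, 18,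
    42, 92, 34, 19, 23, 7, 30, 3, 21, 32, 22, 60, 52, 33, 16, 47, 18, 92, 20, 76, 37, 84, 30,
    72, 40, 22, 9, 19, 26, 50, 33, 55, 52, 56, 100, 64, 80, 18, 76, 18, 7, 10, 19, 27, 70,
    102, 112, 57, 37, 19, 86, 15, 50, 26, 64, 30, 23, 11, 33, 72, 7, 11, 51, 23, 100, 52, 8,
    26, 40, 72, 18, 37, 33, 15, 11, 50, 28, 16, 10, 3, 23, 50, 27, 96, 53, 58, 102, 34, 45,
    10, 31, 70, 52, 1, 11, 42, 56, 30, 26, 64, 15, 4, 54, 32, 8, 102, 53, 74, 96, 45, 54, 18,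
    17, 20, 22, 7, 28, 17, 15, 30, 26, 17, 90, 30, 26, 4, 19, 29, 74, 11, 66, 39, 56, 42, 17,
    84, 18, 53, 20, 72, 8, 29, 27, 72, 96, 53, 59, 104, 17, 90, 20, 38, 39, 54, 42, 48, 15, 8,
    47, 33, 41, 52, 1, 70, 15, 28, 58, 3, 21, 18, 82, 64, 1, 59, 116, 20, 12, 16, 28, 4, 1,
    32, 17, 68, 7, 51, 88, 34, 76, 40, 104, 18, 86, 61, 9, 8, 30, 32, 50, 27, 9, 31, 70, 56,
    37, 94, 102, 76, 53, 46, 15, 88, 1, 59, 80, 19, 17, 18, 76, 46, 1, 52, 29, 3, 42, 84, 72,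
    33, 56, 22, 102, 21, 27, 58, 1, 3, 16, 9, 12, 17, 18, 54, 72, 84, 38, 60, 66, 80, 21, 92,
    26, 48, 80, 21, 48, 54, 3, 60, 33, 38, 72, 96, 72, 50, 84, 66, 116, 38, 48, 32, 80, 53,
    10, 1, 16, 58, 22, 7, 3, 15, 42, 28, 32, 58, 1, 104, 56, 29, 7, 12, 19, 92, 4, 50, 27, 17,
    4, 42, 18, 26, 50, 64, 76, 56, 52, 25, 34, 3, 31, 92, 52, 18, 1, 4, 104, 18, 26, 40, 52,
    28, 32, 56, 19, 16, 4, 42, 11, 42, 27, 38, 17, 72, 53, 102, 56, 21, 3, 25, 34, 20, 58, 12,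
    41, 54, 33, 11, 56, 26, 4, 1, 32, 66, 9, 57, 84, 47, 80, 58, 31, 53, 104, 13, 70, 88, 28,
    32, 35, 67, 26, 92, 60, 90, 22, 68, 26, 20, 64, 56, 16, 34, 40, 58, 19, 12, 48, 16, 7, 28,
    10, 1, 22, 40, 25, 19, 46, 17, 22, 16, 48, 58, 35, 68, 1, 10, 13, 31, 46, 52, 28, 15, 3,
    32, 34, 31, 52, 48, 26, 84, 68, 47, 13, 88, 35, 40, 1, 16, 11, 20, 29, 20, 4, 1, 32, 17,
    54, 7, 26, 12, 50, 30, 23, 11, 26, 28, 80, 15, 40, 60, 22, 10, 28, 19, 26, 12, 16, 13, 3,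
    18, 52, 40, 20, 12, 64, 46, 100, 56, 68, 22, 108, 48, 112, 30, 8, 8, 56, 76, 46, 1, 29,
    42, 16, 72, 22, 50, 36, 42, 3, 12, 33, 60, 38, 22, 16, 22, 7, 4, 10, 32, 4, 28, 26, 42,
    19, 80, 30, 50, 68, 10, 76, 100, 68, 112, 80, 12, 1, 46, 56, 8, 20, 4, 30, 72, 84, 28, 36,
    4, 10, 13, 32, 92, 41, 9, 64, 28, 4, 20, 27, 8, 13, 36, 10, 9, 3, 30, 34, 23, 36, 19, 70,
    28, 54, 39, 25, 42, 3, 41, 80, 8, 20, 30, 38, 21, 4, 27, 34, 28, 13, 34, 64, 8, 100, 62,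
    3, 37, 50, 15, 94, 36, 30, 17, 48, 40, 76, 60, 116, 72, 54, 108, 32, 68, 22, 48, 84, 56,
    34, 12, 22, 34, 7, 56, 26, 4, 64, 36, 100, 74, 84, 90, 23, 39, 92, 106, 12, 56, 26, 84, 4,
    20, 32, 8, 88, 8, 4, 26, 42, 56, 68, 80, 30, 100, 76, 62, 40, 68, 88, 32, 18, 50, 96, 66,
    7, 16, 22, 60, 92, 72, 8, 84, 26, 36, 60, 104, 28, 10, 52, 96, 36, 58, 80, 3, 50, 8, 12,
    26, 84, 112, 1, 5, 50, 54, 36, 37, 10, 22, 15, 10, 9, 56, 43, 82, 18, 50, 30, 13, 1, 26,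
    58, 15, 1, 22, 12, 26, 50, 84, 30, 36, 104, 84, 66, 26, 10, 7, 16, 28, 18, 3, 12, 58, 104,
    36, 1, 13, 35, 28, 15, 16, 66, 7, 60, 39, 42, 46, 52, 72, 80, 32, 27, 30, 61, 9, 16, 21,
    5, 60, 8, 26, 30, 32, 18, 70, 26, 15, 60, 28, 16, 26, 48, 66, 28, 84, 80, 112, 20, 4, 16,
    58, 104, 11, 15, 16, 4, 28, 1, 13, 30, 7, 104, 10, 100, 64, 18, 116, 104, 100, 64, 16, 18,
    10, 116, 10, 28, 48, 16, 84, 104, 60, 18, 100, 108, 30, 13, 29, 1, 32, 1, 60, 32, 30, 72,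
    9, 46, 22, 60, 108, 32, 18, 60, 52, 28, 36, 80, 9, 21, 30, 1, 13, 46, 28, 37, 23, 66, 56,
    52, 28, 34, 8, 72, 50, 64, 84, 88, 116, 30, 56, 12, 8, 3, 42, 29, 20, 30, 9, 72, 27, 4,
    66, 60, 23, 50, 42, 84, 20, 11, 10, 13, 1, 8, 32, 12, 34, 64, 46, 100, 18, 68, 72, 48, 26,
    10, 38, 92, 5, 30, 27, 7, 34, 72, 18, 116, 4, 64, 28, 108, 88, 28, 84, 96, 50, 10, 4, 56,
    92, 28, 30, 92, 104, 10, 96, 58, 112, 64, 34, 56, 12, 32, 48, 4, 32, 10, 18, 1, 104, 70,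
    17, 28, 96, 104, 10, 66, 30, 68, 92, 16, 40, 48, 56, 60, 26, 54, 40, 52, 92, 48, 16, 68,
    112, 100, 36, 84, 78, 32, 18, 88, 70, 40, 52, 8, 1, 17, 40, 68, 88, 96, 50, 72, 8, 42, 56,
    12, 20, 26, 84, 84, 26, 36, 104, 60, 66, 22, 58, 18, 104, 11, 36, 10, 7, 16, 15, 60, 3,
    26, 45, 21, 78, 30, 32, 12, 8, 72, 34, 96, 52, 104, 56, 80, 25, 4, 48, 42, 20, 50, 88, 68,
    30, 9, 116, 34, 64, 32, 10, 84, 52, 34, 64, 72, 8, 52, 46, 20, 68, 84, 30, 52, 56, 100,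
    32, 18, 8, 88, 52, 28, 56, 100, 72, 16, 96, 54, 104, 8, 34, 92, 60, 36, 26, 60, 26, 48,
    92, 18, 62, 30, 17, 4, 16, 96, 54, 104, 60, 26, 48, 30, 29, 92, 1, 8, 46, 92, 8, 26, 34,
    8, 1, 46, 66, 27, 13, 11, 40, 66, 80, 84, 104, 48, 30, 92, 10, 20, 42, 64, 16, 12, 50, 34,
    22, 88, 19, 78, 5, 72, 96, 18, 54, 16, 38, 11, 33, 66, 84, 48, 26, 9, 92, 22, 68, 66, 84,
    60, 92, 48, 26, 38, 4, 16, 64, 40, 42, 32, 18, 8, 40, 22, 100, 1, 17, 46, 3, 26, 80, 48,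
    4, 12, 23, 10, 11, 26, 30, 80, 16, 68, 36, 8, 22, 40, 4, 30, 66, 84, 80, 16, 12, 8, 38, 1,
    60, 46, 50, 88, 40, 84, 96, 8, 36, 46, 104, 4, 18, 68, 32, 22, 10, 48, 66, 30, 20, 3, 36,
    8, 84, 66, 116, 30, 10, 68, 32, 18, 60, 56, 108, 22, 68, 40, 10, 30, 64, 16, 28, 4, 96,
    80, 36, 34, 68, 40, 5, 54, 17, 8, 38, 33, 35, 36, 72, 96, 62, 66, 28, 37, 116, 64, 86, 40,
    12, 1, 22, 34, 108, 22, 7, 88, 58, 66, 40, 23, 116, 98, 64, 34, 33, 36, 1, 4, 20, 28, 72,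
    116, 40, 22, 12, 108, 4, 78, 94, 50, 1, 37, 112, 29, 80, 96, 36, 70, 19, 20, 9, 8, 20, 12,
    36, 4, 26, 34, 80, 7, 74, 34, 36, 38, 20, 94, 8, 108, 96, 88, 26, 92, 100, 48, 78, 8, 72,
    96, 108, 80, 38, 20, 7, 36, 74, 92, 48, 22, 84, 10, 68, 30, 56, 38, 100, 8, 34, 72, 40,
    68, 26, 30, 116, 56, 108, 64, 100, 50, 34, 42, 27, 70, 92, 60, 18, 10, 28, 66, 96, 54,
    104, 1, 16, 84, 40, 30, 43, 36, 9, 68, 11, 25, 54, 1, 4, 34, 36, 84, 68, 104, 48, 72, 20,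
    22, 96, 48, 30, 84, 3, 56, 104, 25, 34, 9, 4, 12, 20, 116, 64, 56, 28, 34, 72, 80, 12, 8,
    20, 36, 26, 88, 8, 1, 48, 20, 4, 18, 28, 22, 68, 22, 108, 4, 56, 1, 10, 22, 28, 68, 108,
    64, 12, 30, 30, 17, 9, 3, 18, 56, 50, 28, 96, 4, 54, 16, 15, 88, 34, 46, 19, 20, 34, 42,
    7, 25, 46, 72, 38, 28, 13, 36, 66, 48, 20, 92, 10, 26, 11, 48, 42, 12, 4, 80, 40, 88, 96,
    80, 110, 116, 82, 58, 100, 53, 28, 10, 1, 36, 19, 46, 68, 54, 20, 10, 28, 4, 9, 12, 36,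
    38, 17, 21, 23, 7, 1, 46, 18, 48, 42, 92, 20, 60, 36, 36, 68, 48, 92, 1, 25, 9, 21, 78, 5,
    13, 29, 38, 8, 17, 80, 41, 48, 26, 92, 88, 4, 9, 11, 21, 78, 18, 5, 13, 12, 22, 1, 16, 4,
    26, 68, 58, 15, 1, 13, 18, 35, 42, 80, 46, 36, 84, 32, 17, 38, 3, 10, 18, 32, 36, 52, 10,
    28, 36, 60, 88, 104, 48, 36, 84, 60, 32, 18, 8, 80, 56, 10, 3, 1, 13, 50, 28, 20, 36, 38,
    11, 9, 29, 54, 35, 80, 38, 48, 64, 28, 88, 36, 48, 28, 20, 80, 60, 112, 12, 10, 36, 36,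
    64, 48, 40, 12, 72, 92, 50, 96, 1, 13, 54, 62, 104, 19, 20, 30, 32, 23, 10, 68, 60, 32,
    10, 64, 32, 18, 92, 50, 58, 23, 3, 28, 60, 18, 72, 54, 1, 13, 64, 58, 19, 112, 5, 68, 38,
    92, 96, 50, 72, 28, 20, 12, 10, 36, 1, 13, 30, 19, 34, 9, 10, 68, 64, 30, 80, 58, 8, 88,
    40, 96, 10, 36, 12, 8, 30, 40, 32, 20, 56, 58, 30, 76, 10, 9, 33, 34, 84, 66, 72, 108, 39,
    42, 18, 3, 42, 38, 10, 35, 3, 23, 11, 40, 42, 32, 19, 1, 13, 32, 62, 35, 68, 10, 9, 20,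
    12, 3, 46, 64, 3, 11, 19, 26, 30, 38, 28, 9, 30, 10, 29, 56, 60, 8, 40, 36, 36, 11, 34,
    10, 9, 46, 29, 56, 37, 70, 72, 41, 80, 38, 20, 3, 42, 30, 28, 36, 20, 34, 48, 40, 12, 10,
    18, 64, 42, 12, 46, 20, 22, 9, 20, 18, 11, 10, 32, 36, 28, 52, 12, 50, 7, 12, 7, 32, 28,
    36, 42, 48, 22, 36, 9, 30, 3, 10, 12, 3, 34, 23, 40, 28, 15, 5, 8, 36, 10, 3, 12, 9, 7,
    22, 26, 12, 10, 32, 60, 56, 64, 11, 23, 38, 30, 5, 18, 10, 3, 21, 48, 40, 3, 26, 10, 8,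
    32, 56, 38, 32, 13, 5, 18, 4, 52, 30, 40, 1, 8, 76, 62, 34, 92, 116, 10, 1, 13, 5, 29, 30,
    46, 21, 52, 18, 20, 4, 28, 36, 62, 8, 76, 34, 88, 18, 3, 30, 21, 5, 40, 18, 12, 52, 4, 30,
    52, 72, 42, 80, 1, 13, 22, 5, 116, 21, 60, 100, 10, 4, 10, 68, 64, 48, 52, 20, 5, 33, 1,
    13, 25, 54, 28, 30, 29, 32, 11, 12, 39, 13, 22, 1, 9, 33, 12, 18, 72, 42, 12, 92, 40, 36,
    8, 26, 88, 76, 72, 20, 104, 38, 5, 13, 22, 32, 50, 21, 10, 30, 7, 17, 28, 3, 42, 34, 20,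
    12, 64, 62, 33, 42, 13, 11, 4, 40, 35, 25, 3, 13, 100, 42, 33, 37, 52, 18, 40, 36, 30, 13,
    46, 25, 7, 3, 8, 72, 43, 26, 21, 48, 52, 17, 42, 13, 3, 8, 52, 18, 72, 39, 29, 32, 18, 72,
    48, 39, 17, 62, 33, 40, 50, 52, 7, 18, 1, 48, 12, 29, 15, 72, 7, 52, 28, 12, 26, 48, 64,
    12, 48, 28, 26, 4, 33, 12, 42, 13, 20, 52, 72, 40, 4, 18, 34, 64, 48, 10, 42, 13, 7, 18,
    5, 15, 29, 74, 32, 66, 36, 3, 58, 26, 35, 62, 23, 4, 33, 52, 100, 84, 10, 66, 48, 5, 47,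
    62, 7, 29, 13, 22, 55, 42, 12, 10, 31, 64, 5, 48, 9, 18, 3, 76, 29, 62, 84, 66, 48, 18, 3,
    26, 25, 62, 72, 46, 60, 12, 42, 13, 20, 40, 1, 48, 22, 9])
    (by decide +kernel) χ h

set_option maxRecDepth 100000 in
theorem ne_ratio_1_6 (χ : ℕ → Fin 3) (h : Avoids [(1, 12)] χ) :
    χ (1 * 1) ≠ χ (1 * 6) :=
  ne_of_refute 40 (
    [4, 10, 12, 72, 36, 24, 60, 96, 120, 8, 3, 9, 16, 46, 32, 28, 44, 5, 38, 2, 5, 68, 38, 17, 116,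
    86, 70, 47, 25, 92, 34, 54, 18, 9, 54, 3, 2, 8, 20, 32, 68, 46, 16, 32, 14, 46, 37, 39,
    60, 5, 8, 64, 68, 22, 20, 28, 60, 5, 88, 8, 104, 8, 40, 14, 28, 29, 30, 64, 48, 18, 15,
    42, 22, 48, 46, 27, 90, 60, 30, 48, 21, 51, 84, 100, 22, 7, 19, 57, 82, 102, 63, 46, 52,
    7, 74, 102, 58, 19, 84, 7, 48, 43, 27, 3, 39, 66, 63, 108, 114, 81, 120, 84, 69, 3, 84,
    48, 78, 43, 33, 19, 30, 21, 60, 102, 30, 21, 48, 52, 102, 60, 63, 78, 114, 45, 22, 7, 19,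
    34, 32, 56, 8, 46, 31, 120, 66, 30, 21, 48, 54, 90, 33, 57, 60, 102, 32, 22, 52, 48, 2,
    60, 5, 24, 17, 94, 26, 25, 38, 20, 64, 8, 28, 20, 44, 24, 18, 26, 14, 40, 52, 56, 34, 60,
    44, 92, 76, 50, 28, 20, 44, 48, 25, 7, 42, 28, 40, 2, 22, 52, 48, 8, 26, 44, 25, 64, 34,
    24, 60, 96, 64, 88, 54, 20, 68, 54, 46, 24, 8, 88, 96, 8, 20, 18, 24, 48, 30, 25, 84, 24,
    46, 2, 13, 7, 18, 118, 19, 66, 56, 52, 96, 54, 3, 51, 9, 16, 78, 49, 33, 66, 15, 66, 120,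
    48, 120, 30, 25, 61, 94, 32, 52, 62, 51, 100, 54, 80, 21, 14, 114, 11, 40, 68, 26, 14, 40,
    52, 50, 56, 92, 34, 60, 9, 40, 62, 68, 21, 52, 102, 66, 84, 36, 24, 9, 60, 27, 9, 78, 69,
    33, 96, 27, 75, 3, 54, 42, 25, 94, 100, 51, 108, 3, 24, 42, 27, 90, 15, 60, 114, 48, 30,
    84, 72, 46, 24, 120, 66, 108, 12, 9, 16, 2, 52, 100, 27, 112, 62, 80, 78, 22, 22, 18, 15,
    60, 34, 76, 52, 32, 20, 56, 36, 41, 74, 28, 60, 64, 108, 108, 60, 120, 90, 55, 25, 102,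
    94, 76, 69, 39, 8, 70, 34, 52, 22, 7, 90, 120, 67, 25, 61, 72, 114, 31, 54, 12, 27, 63,
    66, 18, 102, 15, 19, 102, 36, 66, 58, 72, 82, 31, 26, 92, 77, 17, 43, 24, 78, 94, 40, 118,
    108, 16, 82, 2, 28, 66, 39, 15, 19, 120, 64, 82, 40, 72, 31, 27, 114, 12, 46, 54, 24, 96,
    72, 27, 46, 78, 33, 36, 19, 58, 54, 21, 34, 27, 12, 46, 24, 29, 19, 2, 94, 100, 76, 44,
    72, 57, 100, 31, 64, 39, 70, 36, 42, 13, 25, 82, 12, 27, 72, 120, 112, 60, 78, 36, 9, 108,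
    56, 24, 34, 21, 7, 40, 2, 60, 82, 45, 116, 70, 26, 72, 29, 88, 65, 27, 100, 12, 29, 54,
    21, 64, 16, 2, 33, 5, 58, 32, 19, 26, 8, 120, 61, 19, 102, 46, 72, 32, 104, 24, 2, 13, 18,
    64, 16, 2, 58, 5, 33, 34, 92, 50, 14, 38, 68, 32, 26, 44, 72, 20, 25, 40, 72, 94, 21, 57,
    102, 61, 120, 12, 81, 38, 64, 42, 68, 27, 17, 82, 86, 26, 53, 55, 32, 104, 108, 8, 20, 18,
    68, 64, 112, 16, 2, 34, 76, 29, 33, 110, 50, 78, 23, 85, 112, 16, 52, 27, 90, 36, 60, 42,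
    15, 22, 24, 3, 22, 92, 68, 84, 2, 24, 68, 62, 32, 26, 17, 12, 44, 28, 86, 18, 64, 60, 8,
    36, 26, 32, 22, 8, 120, 61, 100, 108, 80, 84, 46, 61, 120, 64, 12, 38, 8, 59, 26, 27, 44,
    60, 82, 3, 36, 84, 46, 66, 7, 120, 22, 24, 15, 34, 16, 60, 12, 36, 24, 22, 68, 26, 32, 92,
    62, 120, 2, 64, 88, 116, 2, 60, 8, 26, 36, 72, 84, 46, 24, 22, 2, 5, 88, 54, 28, 96, 8,
    52, 32, 20, 12, 36, 20, 68, 34, 32, 52, 40, 21, 62, 17, 26, 23, 72, 57, 102, 58, 11, 104,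
    14, 56, 38, 20, 96, 49, 18, 78, 54, 56, 22, 15, 66, 14, 76, 39, 88, 70, 26, 13, 56, 54,
    68, 38, 18, 56, 60, 20, 92, 5, 64, 84, 47, 72, 12, 56, 38, 20, 46, 64, 24, 30, 16, 12, 72,
    22, 15, 36, 66, 14, 3, 24, 16, 84, 2, 11, 74, 64, 27, 3, 38, 74, 40, 68, 56, 24, 92, 84,
    56, 20, 38, 23, 66, 12, 16, 40, 26, 80, 92, 120, 72, 40, 26, 68, 92, 14, 47, 40, 26, 44,
    76, 38, 64, 16, 12, 120, 28, 100, 104, 18, 68, 23, 68, 7, 14, 66, 47, 28, 80, 14, 56, 18,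
    42, 60, 13, 86, 5, 108, 12, 2, 68, 52, 100, 72, 12, 56, 2, 24, 8, 64, 8, 20, 24, 38, 52,
    24, 16, 7, 46, 30, 12, 16, 30, 36, 14, 52, 27, 11, 9, 3, 72, 76, 16, 120, 12, 40, 21, 36,
    54, 22, 9, 60, 108, 78, 18, 24, 30, 60, 36, 22, 46, 52, 32, 20, 9, 12, 36, 24, 60, 70, 40,
    21, 2, 78, 28, 19, 54, 96, 43, 18, 15, 50, 40, 21, 2, 64, 38, 44, 26, 8, 12, 40, 21, 5,
    60, 78, 51, 100, 54, 28, 24, 88, 7, 22, 60, 76, 42, 31, 52, 54, 36, 64, 78, 51, 58, 100,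
    54, 28, 60, 29, 46, 68, 44, 14, 76, 86, 31, 57, 52, 27, 3, 2, 24, 60, 32, 8, 44, 28, 76,
    44, 32, 8, 22, 24, 24, 16, 46, 14, 9, 68, 50, 16, 60, 30, 46, 36, 52, 27, 9, 3, 42, 32, 11])
    (by decide +kernel) χ h

set_option maxRecDepth 100000 in
theorem ne_ratio_1_3 (χ : ℕ → Fin 3) (h : Avoids [(1, 6), (1, 12)] χ) :
    χ (2 * 1) ≠ χ (2 * 3) :=
  ne_of_refute 40 (
    [12, 72, 1, 8, 30, 48, 4, 60, 18, 10, 3, 36, 28, 52, 56, 15, 17, 24, 90, 102, 5, 39, 33, 54,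
    34, 52, 36, 84, 3, 16, 14, 17, 32, 24, 5, 96, 21, 54, 10, 34, 3, 25, 52, 44, 5, 17, 86,
    47, 56, 36, 45, 21, 88, 70, 26, 42, 19, 49, 21, 96, 78, 38, 10, 24, 9, 24, 32, 20, 38, 56,
    11, 36, 23, 5, 24, 17, 32, 18, 20, 14, 11, 26, 24, 96, 16, 38, 64, 40, 112, 52, 60, 10,
    22, 28, 5, 60, 14, 10, 44, 9, 29, 34, 40, 5, 36, 23, 10, 60, 42, 7, 26, 3, 22, 37, 38, 68,
    24, 32, 60, 3, 40, 25, 4, 44, 48, 18, 108, 20, 120, 52, 28, 32, 26, 44, 19, 40, 4, 34, 27,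
    48, 3, 4, 18, 24, 15, 32, 5, 32, 60, 24, 52, 31, 50, 20, 14, 4, 34, 22, 16, 10, 24, 60,
    96, 16, 54, 4, 13, 28, 48, 18, 14, 22, 52, 44, 36, 10, 14, 84, 16, 13, 24, 17, 66, 22, 50,
    47, 5, 14, 30, 48, 29, 36, 11, 56, 86, 26, 54, 18, 16, 84, 13, 24, 66, 11, 47])
    (by decide +kernel) χ h

set_option maxRecDepth 100000 in
theorem ne_ratio_2_3 (χ : ℕ → Fin 3) (h : Avoids [(1, 3), (1, 6), (1, 12)] χ) :
    χ (2 * 2) ≠ χ (2 * 3) :=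
  ne_of_refute 40 (
    [1, 12, 36, 2, 72, 24, 9, 3, 108, 18, 54, 10, 37, 66, 22, 30, 15, 42, 48, 8, 42, 14, 25, 68,
    108, 26, 58, 19, 7, 18, 54, 3, 30, 7, 22, 19, 3, 33, 60, 54, 18, 16, 14, 38, 68, 3, 108,
    30, 19, 21, 57, 58, 38, 68])
    (by decide +kernel) χ h

set_option maxRecDepth 100000 in
theorem ne_ratio_3_4 (χ : ℕ → Fin 3) (h : Avoids [(2, 3), (1, 3), (1, 6), (1, 12)] χ) :
    χ (3 * 3) ≠ χ (3 * 4) :=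
  ne_of_refute 40 (
    [36, 54, 6, 3, 18, 4, 2, 1, 27, 48, 32, 33, 19, 58])
    (by decide +kernel) χ h

theorem not_avoids (χ : ℕ → Fin 3) :
    ¬ Avoids [(3, 4), (2, 3), (1, 3), (1, 6), (1, 12)] χ := fun h =>
  ne_of_refute (u := 3) (v := 3) 40
    [12, 48, 24, 6, 30, 90, 15, 36, 27, 42, 9, 72, 96, 84, 60, 114, 39, 27, 9, 81, 108, 54, 72, 84,
    45, 78, 4, 2, 18, 36, 72, 64, 32, 38, 22, 18, 32, 2, 36, 72, 16, 8, 4, 64, 96, 44, 104,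
    20, 60, 52, 40, 22, 32, 14, 9, 18, 4, 36, 2, 1, 16, 24, 48, 11, 32, 26, 19, 8, 58, 7]
    (by decide +kernel) χ h rfl

theorem not_avoids_nil (χ : ℕ → Fin 3) : ¬ Avoids [] χ := fun h =>
  not_avoids _ <|
    .dilate (k := 3) (by norm_num) ne_ratio_3_4 <|
    .dilate (k := 2) (by norm_num) ne_ratio_2_3 <|
    .dilate (k := 2) (by norm_num) ne_ratio_1_3 <|
    .dilate (k := 1) (by norm_num) ne_ratio_1_6 <|
    .dilate (k := 2) (by norm_num) ne_ratio_1_12 <|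
    h

end DorTwoTwo

/-- Every `3`-coloring of the positive integers admits a monochromatic
`(2,2)`-triple; equivalently `dor(2,2) ≥ 3`. -/
theorem dor_2_2_ge_three (χ : ℕ → Fin 3) :
    ∃ x d : ℕ, 0 < x ∧ 0 < d ∧
      χ x = χ (2 * x + d) ∧ χ (2 * x + d) = χ (2 * x + 2 * d) := by
  by_contra! H
  refine DorTwoTwo.not_avoids_nil χ ⟨fun x w hx hw h => ?_, by simp⟩
  have h1 : 2 * x + (w - x) = x + w := by omega
  have h2 : 2 * x + 2 * (w - x) = 2 * w := by omega
  have := H x (w - x) hx (by omega)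
  rw [h1, h2] at this
  exact this h.1 h.2
end

section
/- There exists a $5$-coloring of the positive integers with no monochromatic $(2,2)$-triple; equivalently, $\mathrm{dor}(2,2) \le 4$. -/
/-!
Cut the positive integers at the numbers `2 ^ k` and `3 * 2 ^ (k - 1)`, number the resulting
blocks in increasing order by `halfOctave`, and colour `n` by its block number modulo `5`.

Suppose `x`, `y = 2 * x + d`, `z = 2 * x + 2 * d` have the same colour. Doubling a number raises
its block number by exactly `2`. As `y ≤ z ≤ 2 * y`, the block numbers of `y` and `z` differ by at
most `2`, so `y` and `z` lie in the same block. The ends of a block have ratio at most `3 / 2`,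
whence `2 * z < 3 * y`, that is `d < 2 * x`, and so `2 * x ≤ y ≤ 4 * x`. Then the block number of
`y` exceeds that of `x` by `2`, `3` or `4`, which is not a multiple of `5`.
-/

/-- The index of the block containing `n`, where the positive integers are cut into blocks at all
`2 ^ k` and `3 * 2 ^ (k - 1)`. The first summand counts the cut points `2 ^ k`, `k ≥ 1`, up to `n`.
The second counts the cut points `3 * 2 ^ (k - 1)`, `k ≥ 0`, up to `n`: the first is `3 / 2`, and
`2 ^ (k + 1) ≤ 4 * n / 3` is equivalent to `3 * 2 ^ (k - 1) ≤ n`. -/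
def halfOctave (n : ℕ) : ℕ := Nat.log 2 n + Nat.log 2 (4 * n / 3)

lemma halfOctave_mono {m n : ℕ} (h : m ≤ n) : halfOctave m ≤ halfOctave n :=
  Nat.add_le_add (Nat.log_mono_right h) (Nat.log_mono_right (by omega))

lemma halfOctave_two_mul {n : ℕ} (hn : 0 < n) : halfOctave (2 * n) = halfOctave n + 2 := by
  unfold halfOctave
  rw [Nat.log_of_one_lt_of_le (n := 2 * n) one_lt_two (by omega),
    Nat.log_of_one_lt_of_le (n := 4 * (2 * n) / 3) one_lt_two (by omega),
    show 2 * n / 2 = n by omega, show 4 * (2 * n) / 3 / 2 = 4 * n / 3 by omega]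
  omega

/-- Two elements of one block have ratio less than `3 / 2`. -/
lemma two_mul_lt_of_halfOctave_eq {y z : ℕ} (hy : 0 < y) (hyz : y ≤ z)
    (h : halfOctave y = halfOctave z) : 2 * z < 3 * y := by
  have h1 : Nat.log 2 y ≤ Nat.log 2 z := Nat.log_mono_right hyz
  have h2 : Nat.log 2 (4 * y / 3) ≤ Nat.log 2 (4 * z / 3) := Nat.log_mono_right (by omega)
  unfold halfOctave at h
  have e1 : Nat.log 2 z = Nat.log 2 y := by omega
  have e2 : Nat.log 2 (4 * z / 3) = Nat.log 2 (4 * y / 3) := by omega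
  have a1 := Nat.pow_log_le_self 2 hy.ne'
  have a2 := Nat.pow_log_le_self 2 (show 4 * y / 3 ≠ 0 by omega)
  have b1 := Nat.lt_pow_succ_log_self one_lt_two z
  have b2 := Nat.lt_pow_succ_log_self one_lt_two (4 * z / 3)
  rw [e1] at b1
  rw [e2] at b2
  generalize Nat.log 2 y = k at *
  generalize Nat.log 2 (4 * y / 3) = m at *
  rw [Nat.succ_eq_add_one] at b1 b2
  -- The block lies in `[2 ^ k, 3 * 2 ^ (k - 1))` if `m ≤ k`, in `[3 * 2 ^ (k - 1), 2 ^ (k + 1))`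
  -- otherwise.
  rcases Nat.lt_or_ge k m with hkm | hkm
  · have : 2 ^ (k + 1) ≤ 2 ^ m := Nat.pow_le_pow_right two_pos hkm
    omega
  · have : 2 ^ m ≤ 2 ^ k := Nat.pow_le_pow_right two_pos hkm
    rw [pow_succ] at b2
    omega

/-- There is a `5`-coloring of the positive integers with no monochromatic
`(2,2)`-triple; equivalently `dor(2,2) ≤ 4`. -/
theorem dor_2_2_le_four :
    ∃ χ : ℕ → Fin 5, ∀ x d : ℕ, 0 < x → 0 < d →
      ¬(χ x = χ (2 * x + d) ∧ χ (2 * x + d) = χ (2 * x + 2 * d)) := by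
  refine ⟨fun n => ⟨halfOctave n % 5, Nat.mod_lt _ (by norm_num)⟩, ?_⟩
  rintro x d hx hd ⟨hxy, hyz⟩
  simp only [Fin.mk.injEq] at hxy hyz
  have yz : halfOctave (2 * x + d) ≤ halfOctave (2 * x + 2 * d) := halfOctave_mono (by omega)
  have zy : halfOctave (2 * x + 2 * d) ≤ halfOctave (2 * (2 * x + d)) :=
    halfOctave_mono (by omega)
  rw [halfOctave_two_mul (by omega)] at zy
  have hlt := two_mul_lt_of_halfOctave_eq (y := 2 * x + d) (z := 2 * x + 2 * d)
    (by omega) (by omega) (by omega)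
  have xy : halfOctave (2 * x) ≤ halfOctave (2 * x + d) := halfOctave_mono (by omega)
  have yx : halfOctave (2 * x + d) ≤ halfOctave (2 * (2 * x)) := halfOctave_mono (by omega)
  rw [halfOctave_two_mul (by omega)] at yx
  rw [halfOctave_two_mul hx] at xy yx
  omega
end

section
/- For every integer $a \ge 2$, there exists a $5$-coloring of the positive integers with no monochromatic $(a, 2a-2)$-triple; equivalently, $\mathrm{dor}(a, 2a-2) \le 4$. -/
/-!
Put `y = a x + d` and `z = (2a - 2) x + 2d`. Then `z = 2 (y - x)` and `y > 2x`, and these two facts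
are all that is needed about the triple. The coloring is `n ↦ ⌊log_r n⌋ mod 5` with `r = 3/2`.

Suppose `x`, `y`, `z` have the same color. Since `y < z < 2y < r² y`, the numbers `y` and `z` lie in
the same block `[r ^ k, r ^ (k + 1))`. Hence `2 (y - x) = z < r y`, which gives `x > y / 4`. But
`x < y / 2` forces `x` into an earlier block, so at least five blocks earlier, and then
`x < y / r⁴ < y / 5`, a contradiction.
-/

/-- The real-variable core: three numbers with `z = 2 (y - x)` and `y > 2x` cannot lie in blocks
`[(3/2) ^ k, (3/2) ^ (k + 1))` whose indices are all congruent modulo `5`. -/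
theorem blocks_not_congruent {x y z : ℝ} (hyx : 2 * x < y) (hz : z = 2 * (y - x))
    (hx0 : 0 < x) {i j k : ℕ}
    (hxl : (3 / 2 : ℝ) ^ i ≤ x) (hxu : x < (3 / 2 : ℝ) ^ (i + 1))
    (hyl : (3 / 2 : ℝ) ^ j ≤ y) (hyu : y < (3 / 2 : ℝ) ^ (j + 1))
    (hzl : (3 / 2 : ℝ) ^ k ≤ z) (hzu : z < (3 / 2 : ℝ) ^ (k + 1))
    (hij : i % 5 = j % 5) (hjk : j % 5 = k % 5) : False := by
  have hr : (1 : ℝ) < 3 / 2 := by norm_num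
  have h1 : j < k + 1 := (pow_lt_pow_iff_right₀ hr).1 (by linarith)
  have h2 : k < j + 3 := (pow_lt_pow_iff_right₀ hr).1 (by
    rw [pow_succ] at hyu
    rw [pow_add]
    linarith [pow_pos (show (0 : ℝ) < 3 / 2 by norm_num) j])
  obtain rfl : j = k := by omega
  have h3 : i < j := (pow_lt_pow_iff_right₀ hr).1 (by
    rw [pow_succ] at hyu
    linarith)
  have h4 : (3 / 2 : ℝ) ^ (i + 1 + 4) ≤ (3 / 2 : ℝ) ^ j :=
    pow_le_pow_right₀ hr.le (by omega)
  rw [pow_add _ (i + 1) 4] at h4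
  rw [pow_succ] at hzu
  linarith

/-- For `a ≥ 2`, there is a `5`-coloring of the positive integers with no
monochromatic `(a, 2a-2)`-triple; equivalently `dor(a, 2a-2) ≤ 4`. -/
theorem dor_a_2a_sub_2_le_four (a : ℕ) (ha : 2 ≤ a) :
    ∃ χ : ℕ → Fin 5, ∀ x d : ℕ, 0 < x → 0 < d →
      ¬(χ x = χ (a * x + d) ∧ χ (a * x + d) = χ ((2 * a - 2) * x + 2 * d)) := by
  have key : ∀ n : ℕ, ∃ k : ℕ, 0 < n →
      (3 / 2 : ℝ) ^ k ≤ n ∧ (n : ℝ) < (3 / 2 : ℝ) ^ (k + 1) := by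
    intro n
    by_cases hn : 0 < n
    · obtain ⟨k, hk⟩ := exists_nat_pow_near (x := (n : ℝ)) (y := 3 / 2)
        (by exact_mod_cast hn) (by norm_num)
      exact ⟨k, fun _ => hk⟩
    · exact ⟨0, fun h => absurd h hn⟩
  choose f hf using key
  refine ⟨fun n => ⟨f n % 5, Nat.mod_lt _ (by norm_num)⟩, ?_⟩
  rintro x d hx hd ⟨h1, h2⟩
  simp only [Fin.mk.injEq] at h1 h2
  obtain ⟨b, rfl⟩ := Nat.exists_eq_add_of_le ha
  have hsub : 2 * (2 + b) - 2 = 2 * b + 2 := by omega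
  rw [hsub] at h2
  obtain ⟨hxl, hxu⟩ := hf x hx
  obtain ⟨hyl, hyu⟩ := hf ((2 + b) * x + d) (by positivity)
  obtain ⟨hzl, hzu⟩ := hf ((2 * b + 2) * x + 2 * d) (by positivity)
  have hx' : (0 : ℝ) < x := by exact_mod_cast hx
  have hd' : (0 : ℝ) < d := by exact_mod_cast hd
  refine blocks_not_congruent ?_ ?_ hx' hxl hxu hyl hyu hzl hzu h1 h2
  · push_cast
    have : (0 : ℝ) ≤ b * x := by positivity
    linarith
  · push_cast
    ring
end

section
/- For every integer $a \ge 2$, there exists a $3$-coloring of the positive integers with no monochromatic $(a, 2a-1)$-triple; equivalently, $\mathrm{dor}(a, 2a-1) \le 2$. -/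
/-!
With `y = a * x + d` and `z = (2 * a - 1) * x + 2 * d` we have `z = 2 * y - x` and `2 * x < y`, so
`2 * y ^ 2 ≤ z ^ 2 < 4 * y ^ 2`. Colour `n` by `⌊log₂ (n ^ 2)⌋` mod `3`: passing from `y` to `z`
raises this logarithm by `1` or `2`, so `y` and `z` always get different colours.
-/

/-- For `a ≥ 2`, there is a `3`-coloring of the positive integers with no
monochromatic `(a, 2a-1)`-triple; equivalently `dor(a, 2a-1) ≤ 2`. -/
theorem dor_a_2a_sub_1_le_two (a : ℕ) (ha : 2 ≤ a) :
    ∃ χ : ℕ → Fin 3, ∀ x d : ℕ, 0 < x → 0 < d →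
      ¬(χ x = χ (a * x + d) ∧ χ (a * x + d) = χ ((2 * a - 1) * x + 2 * d)) := by
  refine ⟨fun n => ⟨Nat.log 2 (n ^ 2) % 3, Nat.mod_lt _ (by norm_num)⟩, ?_⟩
  rintro x d hx hd ⟨-, h⟩
  have hz : (2 * a - 1) * x + 2 * d + x = 2 * (a * x + d) := by
    obtain ⟨b, rfl⟩ : ∃ b, a = b + 1 := ⟨a - 1, by omega⟩
    have : 2 * (b + 1) - 1 = 2 * b + 1 := by omega
    rw [this]; ring
  have hy : 2 * x < a * x + d := by nlinarith
  generalize (2 * a - 1) * x + 2 * d = z at *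
  generalize a * x + d = y at *
  have hy2 : y ^ 2 ≠ 0 := by have : 0 < y := by omega
                             positivity
  have h1 : Nat.log 2 (y ^ 2 * 2) ≤ Nat.log 2 (z ^ 2) := Nat.log_mono_right (by nlinarith)
  have h2 : Nat.log 2 (z ^ 2) ≤ Nat.log 2 (y ^ 2 * 2 * 2) := Nat.log_mono_right (by nlinarith)
  rw [Nat.log_mul_base (by norm_num) (by positivity)] at h1 h2
  rw [Nat.log_mul_base (by norm_num) hy2] at h2
  simp only [Fin.mk.injEq] at h
  omega
end

section
/- For every integer $a \ge 1$, there exists a $4$-coloring of the positive integers with no monochromatic $(a, 2a+1)$-triple; equivalently, $\mathrm{dor}(a, 2a+1) \le 3$. -/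
/-- For `a ≥ 1`, there is a `4`-coloring of the positive integers with no
monochromatic `(a, 2a+1)`-triple; equivalently `dor(a, 2a+1) ≤ 3`. -/
theorem dor_a_2a_add_1_le_three (a : ℕ) (ha : 1 ≤ a) :
    ∃ χ : ℕ → Fin 4, ∀ x d : ℕ, 0 < x → 0 < d →
      ¬(χ x = χ (a * x + d) ∧ χ (a * x + d) = χ ((2 * a + 1) * x + 2 * d)) := by
  -- With `y = a x + d > x`, the third term is `z = x + 2 y`, so `2 y ≤ z < 4 y` and
  -- `⌊log₂ z⌋ - ⌊log₂ y⌋ ∈ {1, 2}`: coloring by `⌊log₂ n⌋ mod 3` separates `y` from `z`.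
  refine ⟨fun n => ⟨Nat.log 2 n % 3, by omega⟩, ?_⟩
  rintro x d hx hd ⟨-, h⟩
  have hxy : x < a * x + d := by nlinarith
  have hz : (2 * a + 1) * x + 2 * d = x + 2 * (a * x + d) := by ring
  rw [hz, Fin.mk.injEq] at h
  generalize a * x + d = y at h hxy
  have h2 : Nat.log 2 (y * 2) = Nat.log 2 y + 1 :=
    Nat.log_mul_base (by norm_num) (by omega)
  have h4 : Nat.log 2 (y * 2 * 2) = Nat.log 2 (y * 2) + 1 :=
    Nat.log_mul_base (by norm_num) (by omega)
  have hlo : Nat.log 2 (y * 2) ≤ Nat.log 2 (x + 2 * y) := Nat.log_mono_right (by omega)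
  have hhi : Nat.log 2 (x + 2 * y) ≤ Nat.log 2 (y * 2 * 2) := Nat.log_mono_right (by omega)
  omega
end

section
/- There exists a $5$-coloring of the positive integers with no monochromatic $(1,5)$-triple; equivalently, $\mathrm{dor}(1,5) \le 4$. (This follows from Theorem 3 with $c = 5$, $p = 8/5$, since $5 < (2 + p^5)/p$.) -/
/-!
Write `y = x + d` and `z = 5 * x + 2 * d = 2 * y + 3 * x`. Since `0 < x < y`, we have
`2 * y < z < 5 * y < 2 ^ 3 * y`, so the integer parts of the binary logarithms of `y` and `z`
differ by `1`, `2` or `3`. Colouring `n` by `⌊log₂ n⌋ mod 4` therefore already separates `y`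
from `z`, and the fifth colour is not needed.
-/

/-- There is a `5`-coloring of the positive integers with no monochromatic
`(1,5)`-triple; equivalently `dor(1,5) ≤ 4`. -/
theorem dor_1_5_le_four :
    ∃ χ : ℕ → Fin 5, ∀ x d : ℕ, 0 < x → 0 < d →
      ¬(χ x = χ (x + d) ∧ χ (x + d) = χ (5 * x + 2 * d)) := by
  refine ⟨fun n => ⟨Nat.log 2 n % 4, by omega⟩, ?_⟩
  rintro x d hx hd ⟨-, h⟩
  have hmod : Nat.log 2 (x + d) % 4 = Nat.log 2 (5 * x + 2 * d) % 4 := congrArg Fin.val h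
  have hy : 2 ^ Nat.log 2 (x + d) ≤ x + d := Nat.pow_log_le_self 2 (by omega)
  have hy' : x + d < 2 ^ (Nat.log 2 (x + d) + 1) := Nat.lt_pow_succ_log_self (by norm_num) _
  have hlow : Nat.log 2 (x + d) + 1 ≤ Nat.log 2 (5 * x + 2 * d) := by
    apply Nat.le_log_of_pow_le (by norm_num)
    rw [pow_succ]
    omega
  have hupp : Nat.log 2 (5 * x + 2 * d) < Nat.log 2 (x + d) + 4 := by
    apply Nat.log_lt_of_lt_pow (by omega)
    rw [pow_succ] at hy'
    rw [pow_add]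
    omega
  omega
end

section
/- There exists a $6$-coloring of the positive integers with no monochromatic $(1,8)$-triple; equivalently, $\mathrm{dor}(1,8) \le 5$. (This follows from Theorem 3 with $c = 6$, $p = 5/3$, since $8 < (2 + p^6)/p$.) -/
/-!
Color `n` by `⌊log₂ n⌋` modulo `6`. With `y = x + d` and `z = 8 * x + 2 * d = 6 * x + 2 * y`
we have `2 * y ≤ z < 8 * y`, so `⌊log₂ z⌋` exceeds `⌊log₂ y⌋` by `1`, `2` or `3`. Hence `y` and
`z` never share a color (already modulo `4`).
-/

/-- There is a `6`-coloring of the positive integers with no monochromatic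
`(1,8)`-triple; equivalently `dor(1,8) ≤ 5`. -/
theorem dor_1_8_le_five :
    ∃ χ : ℕ → Fin 6, ∀ x d : ℕ, 0 < x → 0 < d →
      ¬(χ x = χ (x + d) ∧ χ (x + d) = χ (8 * x + 2 * d)) := by
  refine ⟨fun n => ⟨Nat.log 2 n % 6, Nat.mod_lt _ (by norm_num)⟩, ?_⟩
  rintro x d hx hd ⟨-, h⟩
  rw [Fin.mk.injEq] at h
  have hy : 2 ^ Nat.log 2 (x + d) ≤ x + d := Nat.pow_log_le_self 2 (by omega)
  have hy' : x + d < 2 ^ (Nat.log 2 (x + d) + 1) := Nat.lt_pow_succ_log_self (by norm_num) _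
  have hlow : Nat.log 2 (x + d) + 1 ≤ Nat.log 2 (8 * x + 2 * d) :=
    Nat.le_log_of_pow_le (by norm_num) (by rw [pow_succ]; omega)
  have hupp : Nat.log 2 (8 * x + 2 * d) < Nat.log 2 (x + d) + 4 :=
    Nat.log_lt_of_lt_pow (by omega) (by rw [pow_succ] at hy'; rw [pow_add]; omega)
  omega
end

section
/- There exists a $5$-coloring of the positive integers with no monochromatic $(2,10)$-triple; equivalently, $\mathrm{dor}(2,10) \le 4$. (This follows from Theorem 2 with $c = 5$, $p = 8/5$, $a = 2$, $i = 8$.) -/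
/-!
With `y = 2 * x + d` and `z = 10 * x + 2 * d` we have `2 * y ≤ z < 8 * y`. Hence `⌊log₂ z⌋` exceeds
`⌊log₂ y⌋` by `1`, `2` or `3`, and colouring `n` by `⌊log₂ n⌋` modulo `5` already separates the
last two members of every `(2,10)`-triple.
-/

/-- There is a `5`-coloring of the positive integers with no monochromatic
`(2,10)`-triple; equivalently `dor(2,10) ≤ 4`. -/
theorem dor_2_10_le_four :
    ∃ χ : ℕ → Fin 5, ∀ x d : ℕ, 0 < x → 0 < d →
      ¬(χ x = χ (2 * x + d) ∧ χ (2 * x + d) = χ (10 * x + 2 * d)) := by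
  refine ⟨fun n => ⟨Nat.log 2 n % 5, Nat.mod_lt _ (by norm_num)⟩, ?_⟩
  rintro x d hx hd ⟨-, h⟩
  have hmod : Nat.log 2 (2 * x + d) % 5 = Nat.log 2 (10 * x + 2 * d) % 5 := congrArg Fin.val h
  have hlo : Nat.log 2 (2 * x + d) + 1 ≤ Nat.log 2 (10 * x + 2 * d) := by
    rw [← Nat.log_mul_base (by norm_num) (by omega : 2 * x + d ≠ 0)]
    exact Nat.log_mono_right (by omega)
  have hhi : Nat.log 2 (10 * x + 2 * d) ≤ Nat.log 2 (2 * x + d) + 1 + 1 + 1 := by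
    rw [← Nat.log_mul_base (by norm_num) (by omega : 2 * x + d ≠ 0),
      ← Nat.log_mul_base (by norm_num) (by omega),
      ← Nat.log_mul_base (by norm_num) (by omega)]
    exact Nat.log_mono_right (by omega)
  omega
end

section
/- There exists a $4$-coloring of the positive integers with no monochromatic $(3,7)$-triple; equivalently, $\mathrm{dor}(3,7) \le 3$. (This follows from $\mathrm{dor}(1,3) \le 3$ together with the fact that every $(3,7)$-triple, which is a $(1+2, 3+2\cdot 2)$-triple, is a $(1,3)$-triple.) -/
/-!
Colour `n` by `⌊log₂ n⌋` modulo `4`. In a `(3,7)`-triple `(x, y, z)` one has `z = 2y + x` with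
`0 < x < y`, so `2y ≤ z ≤ 4y` and `⌊log₂ z⌋` exceeds `⌊log₂ y⌋` by `1` or `2`. Hence already the
last two entries have different colours.
-/

/-- There is a `4`-coloring of the positive integers with no monochromatic
`(3,7)`-triple; equivalently `dor(3,7) ≤ 3`. -/
theorem dor_3_7_le_three :
    ∃ χ : ℕ → Fin 4, ∀ x d : ℕ, 0 < x → 0 < d →
      ¬(χ x = χ (3 * x + d) ∧ χ (3 * x + d) = χ (7 * x + 2 * d)) := by
  refine ⟨fun n => ⟨Nat.log 2 n % 4, Nat.mod_lt _ (by norm_num)⟩, ?_⟩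
  rintro x d hx hd ⟨-, h⟩
  have h := congrArg Fin.val h
  dsimp only at h
  have hlog : ∀ n : ℕ, n ≠ 0 → Nat.log 2 (n * 2) = Nat.log 2 n + 1 :=
    fun n hn => Nat.log_mul_base (by norm_num) hn
  have lower : Nat.log 2 ((3 * x + d) * 2) ≤ Nat.log 2 (7 * x + 2 * d) :=
    Nat.log_mono_right (by omega)
  have upper : Nat.log 2 (7 * x + 2 * d) ≤ Nat.log 2 ((3 * x + d) * 2 * 2) :=
    Nat.log_mono_right (by omega)
  rw [hlog _ (by omega)] at lower
  rw [hlog _ (by omega), hlog _ (by omega)] at upper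
  omega
end

section
/- There exists a $4$-coloring of the positive integers with no monochromatic $(3,4)$-triple; equivalently, $\mathrm{dor}(3,4) \le 3$. -/
/-!
Put `y = 3 * x + d` and `z = 4 * x + 2 * d`. Then `4 / 3 < z / y < 2`, and since `2 ≤ (4 / 3) ^ 3`,
the quantity `⌊3 log₂ n⌋ = Nat.log 2 (n ^ 3)` increases by 1, 2 or 3 from `n = y` to `n = z`.
Hence coloring `n` by this quantity modulo 4 always separates `y` from `z`.
-/

/-- There is a `4`-coloring of the positive integers with no monochromatic
`(3,4)`-triple; equivalently `dor(3,4) ≤ 3`. -/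
theorem dor_3_4_le_three :
    ∃ χ : ℕ → Fin 4, ∀ x d : ℕ, 0 < x → 0 < d →
      ¬(χ x = χ (3 * x + d) ∧ χ (3 * x + d) = χ (4 * x + 2 * d)) := by
  refine ⟨fun n => ⟨Nat.log 2 (n ^ 3) % 4, Nat.mod_lt _ (by norm_num)⟩, ?_⟩
  rintro x d hx hd ⟨-, h⟩
  have hmod := congrArg Fin.val h
  dsimp only at hmod
  generalize hy : 3 * x + d = y at hmod
  generalize hz : 4 * x + 2 * d = z at hmod
  have hy0 : y ^ 3 ≠ 0 := pow_ne_zero _ (by omega)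
  have hlow : y ^ 3 * 2 ≤ z ^ 3 := by
    have h1 : (4 * y) ^ 3 ≤ (3 * z) ^ 3 := Nat.pow_le_pow_left (by omega) 3
    rw [mul_pow, mul_pow] at h1
    omega
  have hupp : z ^ 3 ≤ y ^ 3 * 2 * 2 * 2 := by
    have h1 : z ^ 3 ≤ (2 * y) ^ 3 := Nat.pow_le_pow_left (by omega) 3
    rw [mul_pow] at h1
    omega
  have h1 := Nat.log_mono_right (b := 2) hlow
  have h2 := Nat.log_mono_right (b := 2) hupp
  rw [Nat.log_mul_base (by norm_num) hy0] at h1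
  rw [Nat.log_mul_base (by norm_num) (by omega), Nat.log_mul_base (by norm_num) (by omega),
    Nat.log_mul_base (by norm_num) hy0] at h2
  omega
end
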